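/- Claim in the proof of Theorem A: Assume (H1), (H2) and (H3). Then the complement M = X ∖ 𝔠_P of the set 𝔠_P = {x ∈ X : ω(x) is a linearly stable cycle} satisfies M ⊆ U_+ ∩ U_−; that is, every point x ∈ X whose ω-limit set is not a linearly stable cycle lies in both the upper and the lower ω-unstable sets. -/

import Mathlib

open Set Topology Filter MeasureTheory Function

universe u

variable {E : Type u} [NormedAddCommGroup E] [NormedSpace ℝ E]
  [MeasurableSpace E] [BorelSpace E]

/-- `x ≤ y` in the order induced by the cone `K`. -/
def coneLE (K : Set E) (x y : E) : Prop := y - x ∈ K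

/-- `x < y` in the order induced by the cone `K`. -/
def coneLT (K : Set E) (x y : E) : Prop := coneLE K x y ∧ x ≠ y

/-- `x ≪ y` (strong ordering) induced by the cone `K`. -/
def coneLL (K : Set E) (x y : E) : Prop := y - x ∈ interior K

/-- `K` is a closed convex cone inducing a partial order. -/
def IsConeOrder (K : Set E) : Prop :=
  IsClosed K ∧ Convex ℝ K ∧
  (∀ x ∈ K, ∀ α : ℝ, 0 < α → α • x ∈ K) ∧
  (∀ x ∈ K, ∀ y ∈ K, x + y ∈ K) ∧
  K ∩ (-K) = {0}

/-- Closed order interval `[a,b]`. -/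
def ordCC (K : Set E) (a b : E) : Set E := {z | coneLE K a z ∧ coneLE K z b}

/-- Open order interval `[[a,b]]`. -/
def ordOO (K : Set E) (a b : E) : Set E := {z | coneLL K a z ∧ coneLL K z b}

/-- `X` is order-convex. -/
def OrderConvexSet (K X : Set E) : Prop :=
  ∀ a ∈ X, ∀ b ∈ X, coneLT K a b → ordCC K a b ⊆ X

/-- `F` is strongly monotone with respect to the cone `K`. -/
def StronglyMonotoneMap (K : Set E) (F : E → E) : Prop :=
  ∀ x y : E, coneLT K x y → coneLL K (F x) (F y)

/-- The semi-orbit `O⁺(x)` of `x` under `F`. -/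
def semiOrbit (F : E → E) (x : E) : Set E := {y | ∃ n : ℕ, y = F^[n] x}

/-- The ω-limit set of `x` under `F`. -/
def omegaSet (F : E → E) (x : E) : Set E := ⋂ k : ℕ, closure (semiOrbit F (F^[k] x))

/-- `F` is ω-compact in `S ⊆ X`. -/
def OmegaCompactIn (F : E → E) (X S : Set E) : Prop :=
  (∀ x ∈ S, IsCompact (closure (semiOrbit F x)) ∧ closure (semiOrbit F x) ⊆ X) ∧
  IsCompact (closure (⋃ x ∈ S, omegaSet F x)) ∧ closure (⋃ x ∈ S, omegaSet F x) ⊆ X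

/-- Hypothesis (H2): ω-compactness in every closed order interval of `X`. -/
def OmegaCompactIntervals (K : Set E) (F : E → E) (X : Set E) : Prop :=
  ∀ a ∈ X, ∀ b ∈ X, coneLE K a b → OmegaCompactIn F X (ordCC K a b)

/-- The upper ω-limit set `ω₊(x)`. -/
def omegaPlus (K : Set E) (F : E → E) (X : Set E) (x : E) : Set E :=
  ⋂ u ∈ {u ∈ X | coneLL K x u},
    closure (⋃ y ∈ {y ∈ X | coneLT K x y ∧ coneLE K y u}, omegaSet F y)

/-- The lower ω-limit set `ω₋(x)`. -/
def omegaMinus (K : Set E) (F : E → E) (X : Set E) (x : E) : Set E :=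
  ⋂ u ∈ {u ∈ X | coneLL K u x},
    closure (⋃ y ∈ {y ∈ X | coneLT K y x ∧ coneLE K u y}, omegaSet F y)

/-- The upper ω-unstable set `U₊`. -/
def Uplus (K : Set E) (F : E → E) (X : Set E) : Set E :=
  {x ∈ X | omegaPlus K F X x ≠ omegaSet F x}

/-- The lower ω-unstable set `U₋`. -/
def Uminus (K : Set E) (F : E → E) (X : Set E) : Set E :=
  {x ∈ X | omegaMinus K F X x ≠ omegaSet F x}

/-- `q` is a periodic point of `F` with minimal period `p ≥ 1`. -/
def IsMinPeriodicPt (F : E → E) (p : ℕ) (q : E) : Prop :=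
  1 ≤ p ∧ F^[p] q = q ∧ ∀ l : ℕ, 1 ≤ l → l < p → F^[l] q ≠ q

/-- `C` is a linearly stable cycle of `F`: the (semi-)orbit of a periodic point of some
minimal period `p` such that the spectral radius of the derivative of `F^[p]` at every
point of the cycle is at most `1`. -/
def IsLinearlyStableCycle (F : E → E) (C : Set E) : Prop :=
  ∃ (q : E) (p : ℕ), IsMinPeriodicPt F p q ∧ C = semiOrbit F q ∧
    ∀ z ∈ semiOrbit F q, ∃ L : E →L[ℝ] E,
      HasFDerivAt (F^[p]) L z ∧ spectralRadius ℝ L ≤ 1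

/-- Hypothesis (H3): `F` is C¹ and each derivative is a compact strongly positive operator. -/
def SmoothStronglyPositive (K : Set E) (F : E → E) : Prop :=
  ∃ F' : E → (E →L[ℝ] E), Continuous F' ∧ (∀ x : E, HasFDerivAt F (F' x) x) ∧
    (∀ x : E, IsCompactOperator ⇑(F' x)) ∧
    ∀ x v : E, coneLT K 0 v → coneLL K 0 (F' x v)

/-- A Borel set `W` is shy: there is a nonzero compactly supported Borel measure `μ` with
`μ (x + W) = 0` for every `x`. -/
def IsShyBorel (W : Set E) : Prop :=
  MeasurableSet W ∧ ∃ μ : Measure E, μ ≠ 0 ∧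
    (∃ Q : Set E, IsCompact Q ∧ μ Qᶜ = 0) ∧
    ∀ x : E, μ ((fun y => y - x) ⁻¹' W) = 0

/-- A set is shy if it is contained in a shy Borel set. -/
def IsShy (W : Set E) : Prop := ∃ W' : Set E, W ⊆ W' ∧ IsShyBorel W'

/-- `S` is prevalent in `A` if `A \ S` is shy. -/
def PrevalentIn (S A : Set E) : Prop := IsShy (A \ S)

/-- An order decomposition `(A, B')` of `X`: both nonempty, relatively closed in `X`,
`A` lower closed, `B'` upper closed, `A ∪ B' = X` and `int (A ∩ B') = ∅`. -/
def IsOrderDecomp (K X A B' : Set E) : Prop :=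
  A.Nonempty ∧ B'.Nonempty ∧ A ⊆ X ∧ B' ⊆ X ∧
  closure A ∩ X ⊆ A ∧ closure B' ∩ X ⊆ B' ∧
  (∀ a ∈ A, ∀ z ∈ X, coneLE K z a → z ∈ A) ∧
  (∀ b ∈ B', ∀ z ∈ X, coneLE K b z → z ∈ B') ∧
  A ∪ B' = X ∧ interior (A ∩ B') = ∅

/-- An invariant order decomposition of `X`. -/
def IsInvOrderDecomp (K X : Set E) (F : E → E) (A B' : Set E) : Prop :=
  IsOrderDecomp K X A B' ∧ F '' A ⊆ A ∧ F '' B' ⊆ B'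

/-- A set is unordered if it contains no two points `x < y`. -/
def UnorderedSet (K S : Set E) : Prop := ∀ x ∈ S, ∀ y ∈ S, ¬ coneLT K x y

/-- An invariant order resolution of `X`. -/
def IsInvOrderResolution (K X : Set E) (F : E → E) (Γ : Set (Set E × Set E)) : Prop :=
  (∀ p ∈ Γ, IsInvOrderDecomp K X F p.1 p.2) ∧
  (∀ p ∈ Γ, ∀ q ∈ Γ, p.1 ⊆ q.1 ∨ q.1 ⊆ p.1) ∧
  (∀ x ∈ X, UnorderedSet K (semiOrbit F x) → ∃ p ∈ Γ, semiOrbit F x ⊆ p.1 ∩ p.2)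

/-- Hypothesis (H4): the group `G` acts on `X` by an increasing, jointly continuous
action whose homeomorphisms commute with `F`. -/
def GroupActsOn {G : Type*} [Group G] [TopologicalSpace G]
    (K X : Set E) (F : E → E) (act : G → E → E) : Prop :=
  ContinuousOn (fun p : G × E => act p.1 p.2) (Set.univ ×ˢ X) ∧
  (∀ g : G, Set.MapsTo (act g) X X) ∧
  (∀ x ∈ X, act (1 : G) x = x) ∧
  (∀ g h : G, ∀ x ∈ X, act (g * h) x = act g (act h x)) ∧
  (∀ g : G, ∀ x ∈ X, ∀ y ∈ X, coneLE K x y → coneLE K (act g x) (act g y)) ∧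
  (∀ g : G, ∀ x ∈ X, act g (F x) = F (act g x))

/-- A set `S` is `G`-symmetric if every point of `S` is fixed by every group element. -/
def GSymmetricSet {G : Type*} (act : G → E → E) (S : Set E) : Prop :=
  ∀ z ∈ S, ∀ g : G, act g z = z


namespace CSU
section
variable {V : Type u} [NormedAddCommGroup V] [NormedSpace ℝ V]

structure Ctx (K : Set V) (F : V → V) (F' : V → V →L[ℝ] V) (Ω : Set V) (e : V)
    (f : V →L[ℝ] ℝ) : Prop where
  closed : IsClosed K
  smul : ∀ v ∈ K, ∀ t : ℝ, 0 ≤ t → t • v ∈ K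
  add : ∀ v ∈ K, ∀ w ∈ K, v + w ∈ K
  anti : ∀ v ∈ K, -v ∈ K → v = 0
  zero : (0 : V) ∈ K
  eint : e ∈ interior K
  fpos : ∀ v ∈ K, 0 ≤ f v
  fe : f e = 1
  Fc : Continuous F'
  hd : ∀ x, HasFDerivAt F (F' x) x
  cpt : ∀ x, IsCompactOperator (F' x)
  pos : ∀ x, ∀ v ∈ K, v ≠ 0 → F' x v ∈ interior K
  Oc : IsCompact Ω
  Oinv : ∀ z ∈ Ω, F z ∈ Ω
  cs : CompleteSpace V

theorem int_add {K : Set V} (hadd : ∀ v ∈ K, ∀ w ∈ K, v + w ∈ K) {x y : V}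
    (hx : x ∈ interior K) (hy : y ∈ K) : x + y ∈ interior K := by
  have h : IsOpen ((fun v => v - y) ⁻¹' interior K) :=
    isOpen_interior.preimage (by fun_prop)
  refine interior_maximal ?_ h (by simpa using hx)
  intro v hv
  have := hadd _ (interior_subset hv) _ hy
  simpa using this

theorem int_smul {K : Set V} (hs : ∀ v ∈ K, ∀ t : ℝ, 0 ≤ t → t • v ∈ K) {x : V} {t : ℝ}
    (ht : 0 < t) (hx : x ∈ interior K) : t • x ∈ interior K := by
  have h : IsOpen ((fun v : V => t⁻¹ • v) ⁻¹' interior K) :=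
    isOpen_interior.preimage (by fun_prop)
  refine interior_maximal ?_ h ?_
  · intro v hv
    have := hs _ (interior_subset hv) t ht.le
    simpa [smul_smul, ht.ne'] using this
  · simpa [smul_smul, ht.ne'] using hx

/-- derivative cocycle -/
def D (F : V → V) (F' : V → V →L[ℝ] V) : ℕ → V → V →L[ℝ] V
  | 0, _ => ContinuousLinearMap.id ℝ V
  | n + 1, z => (F' (F^[n] z)).comp (D F F' n z)

theorem D_add (F : V → V) (F' : V → V →L[ℝ] V) (m k : ℕ) (z v : V) :
    D F F' (m + k) z v = D F F' m (F^[k] z) (D F F' k z v) := by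
  induction m with
  | zero => simp [D]
  | succ m ih =>
    rw [Nat.succ_add]
    simp only [D, ContinuousLinearMap.comp_apply, ih, ← iterate_add_apply]

namespace Ctx
variable {K : Set V} {F : V → V} {F' : V → V →L[ℝ] V} {Ω : Set V} {e : V}
    {f : V →L[ℝ] ℝ} (h : Ctx K F F' Ω e f)
include h

theorem eK : e ∈ K := interior_subset h.eint

theorem Oit {z : V} (hz : z ∈ Ω) (n : ℕ) : F^[n] z ∈ Ω := by
  induction n with
  | zero => simpa
  | succ n ih => rw [iterate_succ_apply']; exact h.Oinv _ ih

theorem LK (x : V) {v : V} (hv : v ∈ K) : F' x v ∈ K := by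
  by_cases h0 : v = 0
  · rw [h0, map_zero]; exact h.zero
  · exact interior_subset (h.pos x v hv h0)

theorem DK (n : ℕ) (z : V) {v : V} (hv : v ∈ K) : D F F' n z v ∈ K := by
  induction n with
  | zero => simpa [D]
  | succ n ih => exact h.LK _ ih

theorem Fcont : Continuous F :=
  continuous_iff_continuousAt.2 fun x => (h.hd x).continuousAt

theorem Dderiv (n : ℕ) (z : V) : HasFDerivAt F^[n] (D F F' n z) z := by
  induction n with
  | zero => exact hasFDerivAt_id z
  | succ n ih =>
    rw [iterate_succ']
    exact (h.hd _).comp z ih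

theorem Dcont (n : ℕ) : Continuous (D F F' n) := by
  induction n with
  | zero => exact continuous_const
  | succ n ih =>
    have := h.Fcont.iterate n
    exact (h.Fc.comp this).clm_comp ih

/-- order bound by the norm -/
theorem C1 : ∃ C : ℝ, 0 < C ∧ ∀ v : V, ∀ t : ℝ, C * ‖v‖ ≤ t → t • e + v ∈ K := by
  obtain ⟨r, hr, hb⟩ := Metric.isOpen_iff.1 isOpen_interior e h.eint
  refine ⟨2 / r, by positivity, fun v t ht => ?_⟩
  by_cases h0 : v = 0
  · subst h0
    have : 0 ≤ t := by simpa using ht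
    simpa using h.smul e h.eK t this
  have hv : 0 < ‖v‖ := norm_pos_iff.2 h0
  have ht0 : 0 < t := lt_of_lt_of_le (by positivity) ht
  have : e + t⁻¹ • v ∈ K := by
    apply interior_subset; apply hb
    rw [Metric.mem_ball, dist_eq_norm, add_sub_cancel_left, norm_smul, norm_inv,
      Real.norm_of_nonneg ht0.le, inv_mul_lt_iff₀ ht0]
    calc ‖v‖ = (2 / r * ‖v‖) * (r / 2) := by field_simp
      _ ≤ t * (r / 2) := by gcongr
      _ < t * r := by gcongr; linarith
  have := h.smul _ this t ht0.le
  simpa [smul_add, smul_smul, ht0.ne'] using this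

theorem C1int {C : ℝ} (hC : ∀ v : V, ∀ t : ℝ, C * ‖v‖ ≤ t → t • e + v ∈ K)
    {v : V} {t : ℝ} (ht : C * ‖v‖ < t) : t • e + v ∈ interior K := by
  have h1 := hC v (C * ‖v‖) le_rfl
  have h2 := int_smul h.smul (sub_pos.2 ht) h.eint
  have := int_add h.add h2 h1
  convert this using 1
  module

theorem P0 {Q : Set V} (hQ : IsCompact Q) (hQK : Q ⊆ interior K) :
    ∃ β : ℝ, 0 < β ∧ ∀ q ∈ Q, q - β • e ∈ K := by
  obtain ⟨δ, hδ, hs⟩ := hQ.exists_thickening_subset_open isOpen_interior hQK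
  refine ⟨δ / (2 * (‖e‖ + 1)), by positivity, fun q hq => ?_⟩
  apply interior_subset; apply hs
  rw [Metric.mem_thickening_iff]
  refine ⟨q, hq, ?_⟩
  rw [dist_eq_norm, sub_sub_cancel_left, norm_neg, norm_smul, Real.norm_of_nonneg (by positivity)]
  rw [div_mul_eq_mul_div, div_lt_iff₀ (by positivity)]
  nlinarith [norm_nonneg e]

/-- images of balls are relatively compact, uniformly on Ω -/
theorem S (r : ℝ) : ∃ S : Set V, IsCompact S ∧ ∀ z ∈ Ω, ∀ v : V, ‖v‖ ≤ r → F' z v ∈ S := by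
  have := h.cs
  set T : Set V := {y | ∃ z ∈ Ω, ∃ v : V, ‖v‖ ≤ r ∧ y = F' z v} with hT
  refine ⟨closure T, ?_, fun z hz v hv => subset_closure ⟨z, hz, v, hv, rfl⟩⟩
  refine isCompact_iff_totallyBounded_isComplete.2 ⟨TotallyBounded.closure ?_, isClosed_closure.isComplete⟩
  rw [Metric.totallyBounded_iff]
  intro ε hε
  have hc : IsCompact (F' '' Ω) := h.Oc.image h.Fc
  obtain ⟨t, hts, htf, htc⟩ := Metric.finite_approx_of_totallyBounded hc.totallyBounded
    (ε / (2 * (|r| + 1))) (by positivity)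
  have hball : ∀ A ∈ t, ∃ s : Set V, s.Finite ∧ ∀ v, ‖v‖ ≤ r → ∃ y ∈ s, dist (A v) y < ε / 2 := by
    intro A hA
    obtain ⟨z, hz, rfl⟩ := hts hA
    have hcp := (h.cpt z).isCompact_closure_image_closedBall (σ₁₂ := RingHom.id ℝ) r
    obtain ⟨s, hs, hs'⟩ := Metric.totallyBounded_iff.1 hcp.totallyBounded (ε / 2) (by positivity)
    refine ⟨s, hs, fun v hv => ?_⟩
    have : F' z v ∈ closure (F' z '' Metric.closedBall 0 r) :=
      subset_closure ⟨v, by simpa using hv, rfl⟩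
    have := hs' this
    simpa using this
  choose! s hs hs' using hball
  refine ⟨⋃ A ∈ t, s A, htf.biUnion hs, ?_⟩
  rintro y ⟨z, hz, v, hv, rfl⟩
  have := htc ⟨z, hz, rfl⟩
  simp only [mem_iUnion, Metric.mem_ball] at this
  obtain ⟨A, hA, hAz⟩ := this
  obtain ⟨y, hy, hd⟩ := hs' A hA v hv
  simp only [mem_iUnion, Metric.mem_ball]
  refine ⟨y, ⟨A, hA, hy⟩, ?_⟩
  have h1 : dist (F' z v) (A v) ≤ ε / 2 := by
    rw [dist_eq_norm, ← ContinuousLinearMap.sub_apply]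
    rw [dist_eq_norm] at hAz
    calc _ ≤ ‖F' z - A‖ * ‖v‖ := ContinuousLinearMap.le_opNorm _ _
      _ ≤ (ε / (2 * (|r| + 1))) * (|r| + 1) := by
        gcongr
        linarith [le_abs_self r]
      _ = ε / 2 := by field_simp
  linarith [dist_triangle (F' z v) (A v) y]

theorem P (r : ℝ) : ∃ β : ℝ, 0 < β ∧ ∀ z ∈ Ω, ∀ z' ∈ Ω, ∀ v : V, F' z v ∈ K →
    ‖v‖ ≤ r * ‖F' z v‖ → F' z' (F' z v) - (β * ‖F' z v‖) • e ∈ K := by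
  obtain ⟨S, hS, hS'⟩ := h.S r
  have hc : IsCompact (S ∩ (K ∩ {v | 1 ≤ ‖v‖})) :=
    hS.inter_right (h.closed.inter (isClosed_le continuous_const continuous_norm))
  have hQ : IsCompact ((fun p : V × V => F' p.1 p.2) '' (Ω ×ˢ (S ∩ (K ∩ {v | 1 ≤ ‖v‖})))) := by
    apply (h.Oc.prod hc).image
    exact (h.Fc.comp continuous_fst).clm_apply continuous_snd
  obtain ⟨β, hβ, hb⟩ := h.P0 hQ (by
    rintro _ ⟨⟨z, v⟩, ⟨hz, hv, hvK, hv1⟩, rfl⟩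
    refine h.pos z v hvK ?_
    rintro rfl
    simp only [mem_ofPred_eq, norm_zero] at hv1; linarith)
  refine ⟨β, hβ, fun z hz z' hz' v hK hv => ?_⟩
  by_cases h0 : ‖F' z v‖ = 0
  · have := norm_eq_zero.1 h0
    simpa [h0, this] using h.zero
  have hp : 0 < ‖F' z v‖ := lt_of_le_of_ne (norm_nonneg _) (Ne.symm h0)
  set t := ‖F' z v‖ with ht
  have h1 : F' z (t⁻¹ • v) ∈ S := hS' z hz _ (by
    rw [norm_smul, norm_inv, Real.norm_of_nonneg hp.le, inv_mul_le_iff₀ hp]; linarith)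
  have h2 : F' z (t⁻¹ • v) ∈ K := by rw [map_smul]; exact h.smul _ hK _ (by positivity)
  have h3 : 1 ≤ ‖F' z (t⁻¹ • v)‖ := by
    rw [map_smul, norm_smul, norm_inv, Real.norm_of_nonneg hp.le, ← ht, inv_mul_cancel₀ h0]
  have := hb _ ⟨(z', F' z (t⁻¹ • v)), ⟨hz', h1, h2, h3⟩, rfl⟩
  have := h.smul _ this t hp.le
  convert this using 1
  simp [smul_sub, smul_smul, h0, mul_comm]

theorem Q (r c : ℝ) (hc : 0 < c) : ∃ β : ℝ, 0 < β ∧ ∀ z ∈ Ω, ∀ v : V, ‖v‖ ≤ r →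
    β • e - F' z v ∈ K → β • e + F' z v ∈ K → ‖F' z v‖ < c := by
  obtain ⟨S, hS, hS'⟩ := h.S r
  by_contra hcon
  push Not at hcon
  have := fun n : ℕ => hcon (1 / ((n : ℝ) + 1)) Nat.one_div_pos_of_nat
  choose z hz v hv h1 h2 h3 using this
  obtain ⟨y, hy, φ, hφ, hlim⟩ := hS.tendsto_subseq (fun n => hS' _ (hz n) _ (hv n))
  have ht : Tendsto (fun n : ℕ => (1 / ((n : ℝ) + 1)) • e) atTop (𝓝 0) := by
    have := (tendsto_one_div_add_atTop_nhds_zero_nat (𝕜 := ℝ)).smul_const e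
    simpa using this
  have ht' := ht.comp hφ.tendsto_atTop
  have hy1 : y ∈ K := by
    have := h.closed.mem_of_tendsto (ht'.add hlim) (Eventually.of_forall fun n => h2 (φ n))
    simpa using this
  have hy2 : -y ∈ K := by
    have := h.closed.mem_of_tendsto (ht'.sub hlim) (Eventually.of_forall fun n => h1 (φ n))
    simpa using this
  have hy0 := h.anti y hy1 hy2
  have : c ≤ ‖y‖ := ge_of_tendsto hlim.norm (Eventually.of_forall fun n => h3 (φ n))
  rw [hy0, norm_zero] at this
  linarith
end Ctx
end
end CSU


namespace CSU
section
variable {V : Type u} [NormedAddCommGroup V] [NormedSpace ℝ V]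
namespace Ctx
variable {K : Set V} {F : V → V} {F' : V → V →L[ℝ] V} {Ω : Set V} {e : V}
    {f : V →L[ℝ] ℝ} (h : Ctx K F F' Ω e f)
include h

theorem Dle (n : ℕ) (z : V) {v w : V} (hv : w - v ∈ K) : D F F' n z w - D F F' n z v ∈ K := by
  rw [← map_sub]; exact h.DK n z hv

theorem fle {v w : V} (hv : w - v ∈ K) : f v ≤ f w := by
  have := h.fpos _ hv
  rw [map_sub] at this; linarith

theorem D1 (n : ℕ) (z v : V) : D F F' (n + 1) z v = D F F' n (F z) (F' z v) := by
  rw [D_add]; simp [D]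

theorem fC {C : ℝ} (hC : ∀ v : V, ∀ t : ℝ, C * ‖v‖ ≤ t → t • e + v ∈ K) (v : V) :
    f v ≤ C * ‖v‖ := by
  have := h.fpos _ (hC (-v) (C * ‖v‖) (by simp))
  simp [h.fe] at this
  linarith

theorem L1 : ∃ c C B : ℝ, 0 < c ∧ 0 < C ∧ 0 < B ∧ ∀ z ∈ Ω, F' z e - c • e ∈ K ∧
    C • e - F' z e ∈ K ∧ ‖F' z‖ ≤ B := by
  have e0 : e ≠ 0 := by
    rintro rfl
    have := h.fe
    simp at this
  obtain ⟨c, hc, hc'⟩ := h.P0 (Q := (fun z => F' z e) '' Ω)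
    (h.Oc.image (h.Fc.clm_apply continuous_const)) (by
      rintro _ ⟨z, -, rfl⟩
      exact h.pos z e h.eK e0)
  obtain ⟨C1, hC1, hC1'⟩ := h.C1
  obtain ⟨B, hB⟩ := (h.Oc.image h.Fc).isBounded.exists_norm_le
  refine ⟨c, C1 * ((|B| + 1) * (‖e‖ + 1)), |B| + 1, hc, by positivity, by positivity,
    fun z hz => ⟨hc' _ ⟨z, hz, rfl⟩, ?_, ?_⟩⟩
  · rw [sub_eq_add_neg]
    apply hC1'
    rw [norm_neg]
    have := hB _ ⟨z, hz, rfl⟩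
    have h2 := (F' z).le_opNorm e
    have h3 := le_abs_self B
    gcongr
    refine h2.trans ?_
    gcongr <;> linarith
  · have := hB _ ⟨z, hz, rfl⟩
    have h3 := le_abs_self B
    linarith

/-- recursion bounds for `a n z = f (D n z e)` -/
theorem L2 {c C : ℝ} (hL : ∀ z ∈ Ω, F' z e - c • e ∈ K ∧ C • e - F' z e ∈ K)
    (n : ℕ) {z : V} (hz : z ∈ Ω) :
    c * f (D F F' n (F z) e) ≤ f (D F F' (n + 1) z e) ∧
    f (D F F' (n + 1) z e) ≤ C * f (D F F' n (F z) e) := by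
  rw [h.D1]
  have h1 := h.fle (h.Dle n (F z) (hL z hz).1)
  have h2 := h.fle (h.Dle n (F z) (hL z hz).2)
  simp only [map_smul, smul_eq_mul] at h1 h2
  exact ⟨h1, h2⟩

theorem apow {c : ℝ} (hc : 0 < c) (hL : ∀ z ∈ Ω, F' z e - c • e ∈ K) (n : ℕ) :
    ∀ z ∈ Ω, c ^ n ≤ f (D F F' n z e) := by
  induction n with
  | zero => intro z hz; simp [D, h.fe]
  | succ n ih =>
    intro z hz
    rw [h.D1]
    have h1 := h.fle (h.Dle n (F z) (hL z hz))
    simp only [map_smul, smul_eq_mul] at h1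
    have := ih _ (h.Oinv z hz)
    calc c ^ (n+1) = c * c ^ n := by ring
      _ ≤ _ := by gcongr
      _ ≤ _ := h1

theorem apos (n : ℕ) {z : V} (hz : z ∈ Ω) : 0 < f (D F F' n z e) := by
  obtain ⟨c, C, B, hc, hC, hB, hL⟩ := h.L1
  exact lt_of_lt_of_le (pow_pos hc n) (h.apow hc (fun z hz => (hL z hz).1) n z hz)

theorem H1a : ∃ R : ℝ, 0 < R ∧ ∀ z ∈ Ω, ∀ k m : ℕ,
    ‖D F F' k z e‖ * f (D F F' (m + 1) (F^[k] z) e) ≤ R * f (D F F' (m + 1 + k) z e) := by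
  obtain ⟨c, C, B, hc, hC, hB, hL⟩ := h.L1
  obtain ⟨β, hβ, hP⟩ := h.P c⁻¹
  refine ⟨max (‖e‖ + 1) (C / β), lt_of_lt_of_le (by positivity) (le_max_left _ _), ?_⟩
  set R := max (‖e‖ + 1) (C / β) with hR
  intro z hz k
  induction k with
  | zero =>
    intro m
    have := h.apos (m + 1) hz
    simp only [D, iterate_zero, id, add_zero, ContinuousLinearMap.id_apply]
    gcongr
    have := le_max_left (‖e‖ + 1) (C / β)
    linarith
  | succ k ih =>
    intro m
    by_contra! hlt
    have ih' := ih (m + 1)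
    have hzk := h.Oit hz k
    have hzk1 := h.Oit hz (k + 1)
    have hL2 := (h.L2 (c := c) (C := C) (fun z hz => ⟨(hL z hz).1, (hL z hz).2.1⟩) (m + 1) hzk).1
    have hL3 := (h.L2 (c := c) (C := C) (fun z hz => ⟨(hL z hz).1, (hL z hz).2.1⟩) m hzk1).2
    rw [← iterate_succ_apply' F k z] at hL2
    have e1 : m + 1 + 1 + k = m + 1 + (k + 1) := by ring
    rw [e1] at ih'
    set a := f (D F F' (m + 1 + (k + 1)) z e) with ha
    set a1 := f (D F F' (m + 1) (F^[k + 1] z) e) with ha1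
    have ha1p : 0 < a1 := h.apos _ hzk1
    have hd : D F F' (k + 1) z e = F' (F^[k] z) (D F F' k z e) := rfl
    rw [hd] at hlt
    set v := D F F' k z e with hv
    have hvK : v ∈ K := h.DK k z h.eK
    have h1 : c * ‖v‖ ≤ ‖F' (F^[k] z) v‖ := by
      have : (c * ‖v‖) * a1 ≤ ‖F' (F^[k] z) v‖ * a1 := by
        calc (c * ‖v‖) * a1 = ‖v‖ * (c * a1) := by ring
          _ ≤ ‖v‖ * f (D F F' (m + 1 + 1) (F^[k] z) e) := by gcongr
          _ ≤ _ := ih'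
          _ ≤ _ := hlt.le
      exact le_of_mul_le_mul_right this ha1p
    have h2 := hP _ hzk _ hzk1 v (h.LK _ hvK) (by rwa [le_inv_mul_iff₀ hc])
    have h3 := h.fle (h.Dle m (F (F^[k + 1] z)) h2)
    rw [← h.D1, ← hd, ← D_add, ← ha] at h3
    simp only [map_smul, smul_eq_mul] at h3
    have h4 : ‖F' (F^[k] z) v‖ * a1 ≤ C / β * a := by
      rw [div_mul_eq_mul_div, le_div_iff₀ hβ]
      calc ‖F' (F^[k] z) v‖ * a1 * β = (β * ‖F' (F^[k] z) v‖) * a1 := by ring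
        _ ≤ (β * ‖F' (F^[k] z) v‖) * (C * f (D F F' m (F (F^[k + 1] z)) e)) := by gcongr
        _ = C * (β * ‖F' (F^[k] z) v‖ * f (D F F' m (F (F^[k + 1] z)) e)) := by ring
        _ ≤ C * a := by rw [hd]  at h3; gcongr
    have h5 : C / β * a ≤ R * a := by
      have : 0 < a := h.apos _ hz
      gcongr
      exact le_max_right _ _
    linarith

/-- summary of the Harnack-type estimates -/
theorem H2 : ∃ R c c0 : ℝ, 0 < R ∧ 0 < c ∧ 0 < c0 ∧ ∀ z ∈ Ω, ∀ n : ℕ,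
    ‖D F F' n z e‖ ≤ R * f (D F F' n z e) ∧
    c * f (D F F' n z e) ≤ f (D F F' (n + 1) z e) ∧
    f (D F F' (n + 1) z e) ≤ R * f (D F F' n z e) ∧
    D F F' n z e - (c0 * f (D F F' n z e)) • e ∈ K ∧
    (R * f (D F F' n z e)) • e - D F F' n z e ∈ K := by
  obtain ⟨c, C, B, hc, hC, hB, hL⟩ := h.L1
  obtain ⟨C1, hC1, hC1'⟩ := h.C1
  obtain ⟨R, hR, hH⟩ := h.H1a
  have hL' : ∀ z ∈ Ω, F' z e - c • e ∈ K ∧ C • e - F' z e ∈ K :=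
    fun z hz => ⟨(hL z hz).1, (hL z hz).2.1⟩
  have hv1 : ∀ z ∈ Ω, ∀ n : ℕ, ‖D F F' n z e‖ ≤ R / c * f (D F F' (n + 1) z e) := by
    intro z hz n
    have h1 := hH z hz n 0
    have h2 := (h.L2 hL' 0 (h.Oit hz n)).1
    simp only [D, ContinuousLinearMap.id_apply, h.fe, mul_one] at h2
    simp only [zero_add, add_comm 1 n] at h1
    rw [div_mul_eq_mul_div, le_div_iff₀ hc]
    refine le_trans ?_ h1
    gcongr
    exact h2
  set R1 := max (‖e‖) (B * (R / c)) with hR1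
  have hv2 : ∀ z ∈ Ω, ∀ n : ℕ, ‖D F F' n z e‖ ≤ R1 * f (D F F' n z e) := by
    intro z hz n
    cases n with
    | zero => simp [D, h.fe, hR1]
    | succ n =>
      have h1 := hv1 z hz n
      have h2 := (F' (F^[n] z)).le_opNorm (D F F' n z e)
      have h3 := (hL _ (h.Oit hz n)).2.2
      have h4 := h.apos (n + 1) hz
      calc ‖D F F' (n+1) z e‖ ≤ ‖F' (F^[n] z)‖ * ‖D F F' n z e‖ := h2
        _ ≤ B * (R / c * f (D F F' (n + 1) z e)) := by gcongr
        _ = B * (R / c) * f (D F F' (n + 1) z e) := by ring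
        _ ≤ _ := by gcongr; exact le_max_right _ _
  have hup : ∀ z ∈ Ω, ∀ n : ℕ, f (D F F' (n + 1) z e) ≤ C1 * B * ‖D F F' n z e‖ := by
    intro z hz n
    have h1 := h.fC hC1' (D F F' (n+1) z e)
    have h2 := (F' (F^[n] z)).le_opNorm (D F F' n z e)
    have h3 := (hL _ (h.Oit hz n)).2.2
    calc _ ≤ _ := h1
      _ ≤ C1 * (‖F' (F^[n] z)‖ * ‖D F F' n z e‖) := by gcongr; exact h2
      _ ≤ C1 * (B * ‖D F F' n z e‖) := by gcongr
      _ = _ := by ring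
  obtain ⟨β, hβ, hP⟩ := h.P (R / c * C1)
  set c0 := min (min 1 (c / C)) (β / (C1 * B)) with hc0
  have hc0p : 0 < c0 := by simp only [hc0, lt_min_iff]; refine ⟨⟨one_pos, ?_⟩, ?_⟩ <;> positivity
  have hlow : ∀ z ∈ Ω, ∀ n : ℕ, D F F' n z e - (c0 * f (D F F' n z e)) • e ∈ K := by
    intro z hz n
    have key : ∀ s : ℝ, c0 * f (D F F' n z e) ≤ s → D F F' n z e - s • e ∈ K →
        D F F' n z e - (c0 * f (D F F' n z e)) • e ∈ K := by
      intro s hs hs'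
      have := h.add _ hs' _ (h.smul _ h.eK _ (sub_nonneg.2 hs))
      convert this using 1
      module
    match n with
    | 0 =>
      refine key 1 ?_ ?_
      · simp [D, h.fe, hc0]
      · simpa [D] using h.zero
    | 1 =>
      refine key c ?_ ?_
      · have := (h.L2 hL' 0 hz).2
        have h5 : c0 ≤ c / C := (min_le_left _ _).trans (min_le_right _ _)
        have h6 := h.apos 1 hz
        simp only [D, ContinuousLinearMap.id_apply, h.fe, mul_one, zero_add] at this h6 ⊢
        calc _ ≤ c / C * C := by gcongr
          _ = c := by field_simp
      · simpa [D] using (hL z hz).1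
    | k + 2 =>
      have h1 := hv1 z hz k
      have h2 := h.fC hC1' (D F F' (k + 1) z e)
      have h3 := hP _ (h.Oit hz k) _ (h.Oit hz (k + 1)) (D F F' k z e)
        (h.LK _ (h.DK k z h.eK)) (by
          change _ ≤ _ * ‖D F F' (k + 1) z e‖
          calc _ ≤ _ := h1
            _ ≤ R / c * (C1 * ‖D F F' (k + 1) z e‖) := by gcongr
            _ = _ := by ring)
      refine key _ ?_ h3
      have h5 : c0 ≤ β / (C1 * B) := min_le_right _ _
      have h6 := hup z hz (k + 1)
      have h7 := h.apos (k + 2) hz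
      calc _ ≤ β / (C1 * B) * (C1 * B * ‖D F F' (k + 1) z e‖) := by gcongr
        _ = β * ‖D F F' (k + 1) z e‖ := by field_simp
        _ ≤ _ := le_rfl
  set R2 := max (max R1 (C1 * B * R1)) (C1 * R1) with hR2
  have hR1p : 0 < R1 := by
    refine lt_of_lt_of_le ?_ (le_max_right _ _)
    positivity
  refine ⟨R2, c0 * c, c0, lt_of_lt_of_le hR1p ((le_max_left _ _).trans (le_max_left _ _)),
    by positivity, hc0p, fun z hz n => ⟨?_, ?_, ?_, hlow z hz n, ?_⟩⟩
  · refine (hv2 z hz n).trans ?_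
    have := h.apos n hz
    gcongr
    exact (le_max_left _ _).trans (le_max_left _ _)
  · have h1 := h.fle (h.Dle 1 (F^[n] z) (hlow z hz n))
    rw [← D_add, add_comm 1 n] at h1
    simp only [map_smul, smul_eq_mul] at h1
    have h2 := (h.L2 hL' 0 (h.Oit hz n)).1
    simp only [D, ContinuousLinearMap.id_apply, h.fe, mul_one, zero_add] at h1 h2
    refine le_trans ?_ h1
    have := h.apos n hz
    calc _ = c0 * f (D F F' n z e) * c := by ring
      _ ≤ _ := by gcongr
  · refine (hup z hz n).trans ?_
    have h1 := hv2 z hz n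
    have := h.apos n hz
    calc _ ≤ C1 * B * (R1 * f (D F F' n z e)) := by gcongr
      _ = C1 * B * R1 * f (D F F' n z e) := by ring
      _ ≤ _ := by gcongr; exact (le_max_right _ _).trans (le_max_left _ _)
  · rw [sub_eq_add_neg]
    apply hC1'
    rw [norm_neg]
    have h1 := hv2 z hz n
    have := h.apos n hz
    calc _ ≤ C1 * (R1 * f (D F F' n z e)) := by gcongr
      _ = C1 * R1 * f (D F F' n z e) := by ring
      _ ≤ _ := by gcongr; exact (le_max_right _ _)

theorem H3 {c0 : ℝ} {z : V} {k : ℕ} (m : ℕ)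
    (hk : D F F' k z e - (c0 * f (D F F' k z e)) • e ∈ K) :
    c0 * f (D F F' k z e) * f (D F F' m (F^[k] z) e) ≤ f (D F F' (m + k) z e) := by
  have h1 := h.fle (h.Dle m (F^[k] z) hk)
  rw [← D_add] at h1
  simpa only [map_smul, smul_eq_mul] using h1

end Ctx
end
end CSU


namespace CSU
section
variable {V : Type u} [NormedAddCommGroup V] [NormedSpace ℝ V]
namespace Ctx
variable {K : Set V} {F : V → V} {F' : V → V →L[ℝ] V} {Ω : Set V} {e : V}
    {f : V →L[ℝ] ℝ} (h : Ctx K F F' Ω e f)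
include h

theorem obound {C R : ℝ} (hC : ∀ v : V, ∀ t : ℝ, C * ‖v‖ ≤ t → t • e + v ∈ K) (hC0 : 0 < C)
    {z : V} {n : ℕ} (hR : (R * f (D F F' n z e)) • e - D F F' n z e ∈ K) (v : V) (s : ℝ)
    (hs : C * ‖v‖ * (R * f (D F F' n z e)) ≤ s) : s • e + D F F' n z v ∈ K := by
  have h1 := h.DK n z (hC v _ le_rfl)
  have h2 := h.smul _ hR (C * ‖v‖) (by positivity)
  have h3 := h.smul _ h.eK _ (sub_nonneg.2 hs)
  have := h.add _ (h.add _ h1 _ h2) _ h3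
  convert this using 1
  simp only [map_add, map_smul]
  module

theorem H4 : ∃ R : ℝ, 0 < R ∧ ∀ z ∈ Ω, ∀ n : ℕ, ∀ v : V,
    ‖D F F' n z v‖ ≤ R * f (D F F' n z e) * ‖v‖ := by
  obtain ⟨R, c, c0, hR, hc, hc0, H⟩ := h.H2
  obtain ⟨C, hC, hC'⟩ := h.C1
  obtain ⟨β, hβ, hQ⟩ := h.Q c⁻¹ 1 one_pos
  refine ⟨max 1 (C * R / β), lt_of_lt_of_le one_pos (le_max_left _ _), fun z hz n v => ?_⟩
  set R2 := max 1 (C * R / β) with hR2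
  induction n with
  | zero =>
    simp only [D, ContinuousLinearMap.id_apply, h.fe, mul_one]
    have := le_max_left 1 (C * R / β)
    nlinarith [norm_nonneg v]
  | succ n ih =>
    obtain ⟨-, h1, -⟩ := H z hz n
    obtain ⟨-, -, -, -, h2⟩ := H z hz (n + 1)
    have hap := h.apos (n + 1) hz
    have hap' := h.apos n hz
    set a := f (D F F' (n + 1) z e)
    by_cases hcase : c * ‖D F F' n z v‖ ≤ ‖D F F' (n + 1) z v‖
    · by_contra! hlt
      have hv0 : 0 < ‖D F F' (n + 1) z v‖ := lt_of_le_of_lt (by positivity) hlt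
      set t := ‖D F F' (n + 1) z v‖ with ht
      have hb : C * ‖v‖ * (R * a) ≤ t * β := by
        have : C * R / β * a * ‖v‖ ≤ t := by
          refine le_trans ?_ hlt.le
          gcongr
          exact le_max_right _ _
        calc C * ‖v‖ * (R * a) = (C * R / β * a * ‖v‖) * β := by field_simp
          _ ≤ t * β := by gcongr
      have k1 := h.obound hC' hC h2 v _ hb
      have k2 := h.obound hC' hC h2 (-v) (t * β) (by simpa using hb)
      have k1' := h.smul _ k1 t⁻¹ (by positivity)
      have k2' := h.smul _ k2 t⁻¹ (by positivity)
      have e1 : F' (F^[n] z) (t⁻¹ • D F F' n z v) = t⁻¹ • D F F' (n + 1) z v := by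
        rw [map_smul]; rfl
      have := hQ (F^[n] z) (h.Oit hz n) (t⁻¹ • D F F' n z v) (by
        rw [norm_smul, norm_inv, Real.norm_of_nonneg hv0.le, inv_mul_le_iff₀ hv0,
          ← div_eq_mul_inv, le_div_iff₀ hc]
        linarith) (by
          rw [e1]; convert k2' using 1
          simp [smul_add, smul_smul, hv0.ne', sub_eq_add_neg]) (by
          rw [e1]; convert k1' using 1
          simp [smul_add, smul_smul, hv0.ne'])
      rw [e1, norm_smul, norm_inv, Real.norm_of_nonneg hv0.le, ← ht, inv_mul_cancel₀ hv0.ne'] at this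
      exact lt_irrefl _ this
    · push Not at hcase
      calc _ ≤ c * ‖D F F' n z v‖ := hcase.le
        _ ≤ c * (R2 * f (D F F' n z e) * ‖v‖) := by gcongr
        _ = R2 * (c * f (D F F' n z e)) * ‖v‖ := by ring
        _ ≤ _ := by gcongr

/-- one half of the oscillation decay -/
theorem half (C θ : ℝ) (hθ : 0 < θ) : ∃ γ : ℝ, 0 < γ ∧ γ ≤ 1 / 2 ∧ ∀ z ∈ Ω, ∀ k : ℕ, ∀ w : V,
    ∀ d : ℝ, ‖w‖ ≤ C → θ ≤ d → D F F' k z w ∈ K →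
    d * f (D F F' (k + 1) z e) ≤ C * ‖D F F' (k + 1) z w‖ →
    D F F' (k + 2) z w - (γ * d) • D F F' (k + 2) z e ∈ K := by
  obtain ⟨R, c, c0, hR, hc, hc0, H⟩ := h.H2
  obtain ⟨R2, hR2, H4⟩ := h.H4
  by_cases hC : 0 < C
  swap
  · refine ⟨1/2, by norm_num, le_rfl, fun z hz k w d hw hd hwK hx => ?_⟩
    exfalso
    have := h.apos (k + 1) hz
    have : 0 < d * f (D F F' (k + 1) z e) := by
      have := hθ.trans_le hd
      positivity
    have h3 : C * ‖D F F' (k + 1) z w‖ ≤ 0 :=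
      mul_nonpos_of_nonpos_of_nonneg (not_lt.1 hC) (norm_nonneg _)
    linarith
  obtain ⟨β, hβ, hP⟩ := h.P (R2 * C * C / (c * θ))
  refine ⟨min (1/2) (β / (C * R * R)), ?_, min_le_left _ _, fun z hz k w d hw hd hwK hx => ?_⟩
  · rw [lt_min_iff]; exact ⟨by norm_num, by positivity⟩
  set γ := min (1/2) (β / (C * R * R)) with hγ
  have hd0 : 0 < d := hθ.trans_le hd
  have ha := h.apos k hz
  have ha1 := h.apos (k + 1) hz
  have ha2 := h.apos (k + 2) hz
  have hz1 := h.Oit hz k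
  have hz2 := h.Oit hz (k + 1)
  have h1 := H4 z hz k w
  obtain ⟨-, h2, -⟩ := H z hz k
  obtain ⟨-, -, h3, -⟩ := H z hz (k + 1)
  obtain ⟨-, -, -, -, h4⟩ := H z hz (k + 2)
  have hP' := hP _ hz1 _ hz2 (D F F' k z w) (h.LK _ hwK) (by
    change _ ≤ _ * ‖D F F' (k + 1) z w‖
    calc _ ≤ _ := h1
      _ ≤ R2 * (f (D F F' (k + 1) z e) / c) * C := by
        gcongr
        rw [le_div_iff₀ hc]; linarith
      _ = R2 * C / (c * θ) * (θ * f (D F F' (k + 1) z e)) := by field_simp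
      _ ≤ R2 * C / (c * θ) * (C * ‖D F F' (k + 1) z w‖) := by
        refine mul_le_mul_of_nonneg_left (le_trans ?_ hx) (by positivity)
        gcongr
      _ = _ := by ring)
  change D F F' (k + 2) z w - (β * ‖D F F' (k + 1) z w‖) • e ∈ K at hP'
  have h5 := h.smul _ h4 (γ * d) (by positivity)
  have h6 : γ * d * (R * f (D F F' (k + 2) z e)) ≤ β * ‖D F F' (k + 1) z w‖ := by
    calc γ * d * (R * f (D F F' (k + 2) z e))
        ≤ (β / (C * R * R)) * d * (R * (R * f (D F F' (k + 1) z e))) := by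
          gcongr
          exact min_le_right _ _
      _ = (β / C) * (d * f (D F F' (k + 1) z e)) := by field_simp
      _ ≤ (β / C) * (C * ‖D F F' (k + 1) z w‖) := by gcongr
      _ = _ := by field_simp
  have h7 := h.smul _ h.eK _ (sub_nonneg.2 h6)
  have := h.add _ (h.add _ hP' _ h5) _ h7
  convert this using 1
  module

theorem H5o {C : ℝ} (hC0 : 0 < C) (hC : ∀ v : V, ∀ t : ℝ, C * ‖v‖ ≤ t → t • e + v ∈ K)
    (θ : ℝ) (hθ : 0 < θ) : ∃ n : ℕ, ∀ z ∈ Ω, ∀ v : V, ‖v‖ ≤ 1 → ∃ m M : ℝ, |m| ≤ C ∧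
    M - m ≤ θ ∧ D F F' n z v - m • D F F' n z e ∈ K ∧ M • D F F' n z e - D F F' n z v ∈ K := by
  obtain ⟨γ, hγ, hγ2, hh⟩ := h.half (max (1 + C * ‖e‖) (2 * C)) θ hθ
  have key : ∀ j : ℕ, ∀ z ∈ Ω, ∀ v : V, ‖v‖ ≤ 1 → ∃ m M : ℝ, -C ≤ m ∧ m ≤ M ∧ M ≤ C ∧
    (M - m ≤ max θ ((1 - γ) ^ j * (2 * C))) ∧
    D F F' (2 * j) z v - m • D F F' (2 * j) z e ∈ K ∧
    M • D F F' (2 * j) z e - D F F' (2 * j) z v ∈ K := by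
    intro j z hz v hv
    induction j with
    | zero =>
      refine ⟨-C, C, le_rfl, by linarith, le_rfl, ?_, ?_, ?_⟩
      · refine le_trans ?_ (le_max_right _ _)
        simp; linarith
      · have := hC v C (by nlinarith)
        simpa [D, add_comm] using this
      · have := hC (-v) C (by rw [norm_neg]; nlinarith)
        simpa [D, sub_eq_add_neg] using this
    | succ j ih =>
      obtain ⟨m, M, hm, hmM, hM, hd, h1, h2⟩ := ih
      have e2 : 2 * (j + 1) = 2 + 2 * j := by ring
      have h1' : D F F' (2 * (j + 1)) z v - m • D F F' (2 * (j + 1)) z e ∈ K := by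
        have := h.DK 2 (F^[2 * j] z) h1
        rwa [map_sub, map_smul, ← D_add, ← D_add, ← e2] at this
      have h2' : M • D F F' (2 * (j + 1)) z e - D F F' (2 * (j + 1)) z v ∈ K := by
        have := h.DK 2 (F^[2 * j] z) h2
        rwa [map_sub, map_smul, ← D_add, ← D_add, ← e2] at this
      by_cases hcase : M - m ≤ θ
      · exact ⟨m, M, hm, hmM, hM, hcase.trans (le_max_left _ _), h1', h2'⟩
      push Not at hcase
      have hd' : M - m ≤ (1 - γ) ^ j * (2 * C) := by
        rcases le_max_iff.1 hd with hh | hh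
        · linarith
        · exact hh
      have hfin : (1 - γ) * (M - m) ≤ max θ ((1 - γ) ^ (j + 1) * (2 * C)) := by
        refine le_trans ?_ (le_max_right _ _)
        calc _ ≤ (1 - γ) * ((1 - γ) ^ j * (2 * C)) := by gcongr; linarith
          _ = _ := by ring
      have hn1 : ‖v - m • e‖ ≤ max (1 + C * ‖e‖) (2 * C) := by
        refine le_trans ?_ (le_max_left _ _)
        refine (norm_sub_le _ _).trans ?_
        rw [norm_smul, Real.norm_eq_abs]
        gcongr
        exact abs_le.2 ⟨hm, by linarith⟩
      have hn2 : ‖M • e - v‖ ≤ max (1 + C * ‖e‖) (2 * C) := by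
        refine le_trans ?_ (le_max_left _ _)
        refine (norm_sub_le _ _).trans ?_
        rw [norm_smul, Real.norm_eq_abs, add_comm]
        gcongr
        exact abs_le.2 ⟨by linarith, hM⟩
      set w1 := D F F' (2 * j + 1) z (v - m • e) with hw1
      set w2 := D F F' (2 * j + 1) z (M • e - v) with hw2
      have hsum : w1 + w2 = (M - m) • D F F' (2 * j + 1) z e := by
        simp only [hw1, hw2, map_sub, map_smul]; module
      have hf : (M - m) * f (D F F' (2 * j + 1) z e) ≤ C * ‖w1‖ + C * ‖w2‖ := by
        have := h.fC hC (w1 + w2)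
        rw [hsum] at this
        simp only [map_smul, smul_eq_mul] at this
        refine this.trans ?_
        rw [← hsum, ← mul_add]
        gcongr
        exact norm_add_le _ _
      have e3 : 2 * (j + 1) = 2 * j + 2 := by ring
      rcases le_total ‖w1‖ ‖w2‖ with hle | hle
      · have := hh z hz (2 * j) (M • e - v) (M - m) hn2 hcase.le (by simpa using h2) (by
          rw [← hw2]
          refine hf.trans ?_
          calc _ ≤ (2 * C) * ‖w2‖ := by nlinarith
            _ ≤ _ := by gcongr; exact le_max_right _ _)
        refine ⟨m, M - γ * (M - m), hm, by nlinarith, by nlinarith, ?_, h1', ?_⟩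
        · refine le_trans (le_of_eq ?_) hfin; ring
        · rw [e3]; convert this using 1
          simp only [map_sub, map_smul]; module
      · have := hh z hz (2 * j) (v - m • e) (M - m) hn1 hcase.le (by simpa using h1) (by
          rw [← hw1]
          refine hf.trans ?_
          calc _ ≤ (2 * C) * ‖w1‖ := by nlinarith
            _ ≤ _ := by gcongr; exact le_max_right _ _)
        refine ⟨m + γ * (M - m), M, by nlinarith, by nlinarith, hM, ?_, ?_, h2'⟩
        · refine le_trans (le_of_eq ?_) hfin; ring
        · rw [e3]; convert this using 1
          simp only [map_sub, map_smul]; module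
  have hlim : Tendsto (fun j : ℕ => (1 - γ) ^ j * (2 * C)) atTop (𝓝 (0 * (2 * C))) :=
    (tendsto_pow_atTop_nhds_zero_of_lt_one (by linarith) (by linarith)).mul_const _
  rw [zero_mul] at hlim
  obtain ⟨j, hj⟩ := (hlim.eventually_lt_const hθ).exists
  refine ⟨2 * j, fun z hz v hv => ?_⟩
  obtain ⟨m, M, hm, hmM, hM, hd, h1, h2⟩ := key j z hz v hv
  exact ⟨m, M, abs_le.2 ⟨hm, by linarith⟩, hd.trans (by rw [max_eq_left hj.le]), h1, h2⟩

theorem H5 (θ : ℝ) (hθ : 0 < θ) : ∃ N : ℕ, 1 ≤ N ∧ ∀ z ∈ Ω, ∀ v : V, ‖v‖ ≤ 1 → ∃ α : ℝ,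
    ‖D F F' N z v - α • D F F' N z e‖ ≤ θ * f (D F F' N z e) := by
  obtain ⟨R, c, c0, hR, hc, hc0, H⟩ := h.H2
  obtain ⟨R2, hR2, H4⟩ := h.H4
  obtain ⟨C, hC, hC'⟩ := h.C1
  obtain ⟨c', Cu, B, -, hCu, -, hL⟩ := h.L1
  obtain ⟨β, hβ, hQ⟩ := h.Q (R2 * (1 + C * ‖e‖)) (θ * c) (by positivity)
  obtain ⟨n, hn⟩ := h.H5o hC hC' (β / (R * Cu)) (by positivity)
  refine ⟨n + 1, by omega, fun z hz v hv => ?_⟩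
  obtain ⟨m, M, hm, hd, h1, h2⟩ := hn z hz v hv
  refine ⟨m, ?_⟩
  have ha := h.apos n hz
  obtain ⟨-, h3, -, -, h4⟩ := H z hz n
  set a := f (D F F' n z e) with hadef
  set z' := F^[n] z with hz'
  have hz'O : z' ∈ Ω := h.Oit hz n
  set r := D F F' n z v - m • D F F' n z e with hr
  have hr1 : D F F' (n + 1) z v - m • D F F' (n + 1) z e = F' z' r := by
    rw [hr, map_sub, map_smul]; rfl
  have hrn : ‖r‖ ≤ R2 * (1 + C * ‖e‖) * a := by
    have e1 : r = D F F' n z (v - m • e) := by simp [hr]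
    rw [e1]
    refine (H4 z hz n _).trans ?_
    have : ‖v - m • e‖ ≤ 1 + C * ‖e‖ := by
      refine (norm_sub_le _ _).trans ?_
      rw [norm_smul, Real.norm_eq_abs]
      gcongr
    calc _ ≤ R2 * a * (1 + C * ‖e‖) := by gcongr
      _ = _ := by ring
  -- upper order bound
  have hup : (β * a) • e - F' z' r ∈ K := by
    have hMm : 0 ≤ β / (R * Cu) := by positivity
    have k1 : (β / (R * Cu)) • D F F' n z e - r ∈ K := by
      have := h.add _ h2 _ (h.smul _ (h.DK n z h.eK) _ (sub_nonneg.2 hd))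
      convert this using 1
      rw [hr]; module
    have k2 := h.add _ k1 _ (h.smul _ h4 _ hMm)
    have k3 := h.LK z' k2
    have k4 := h.smul _ (hL z' hz'O).2.1 (β / (R * Cu) * (R * a)) (by positivity)
    have := h.add _ k3 _ k4
    convert this using 1
    simp only [map_add, map_sub, map_smul]
    have e1 : β / (R * Cu) * (R * a) * Cu = β * a := by field_simp
    rw [← e1]; module
  have hlow : F' z' r ∈ K := h.LK z' h1
  have := hQ z' hz'O (a⁻¹ • r) (by
    rw [norm_smul, norm_inv, Real.norm_of_nonneg ha.le, inv_mul_le_iff₀ ha]; linarith) (by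
    have := h.smul _ hup a⁻¹ (by positivity)
    convert this using 1
    rw [map_smul, smul_sub, smul_smul]
    congr 2
    field_simp) (by
    have := h.add _ (h.smul _ h.eK β hβ.le) _ (h.smul _ hlow a⁻¹ (by positivity))
    simpa using this)
  rw [map_smul, norm_smul, norm_inv, Real.norm_of_nonneg ha.le, inv_mul_lt_iff₀ ha] at this
  rw [hr1]
  calc _ ≤ _ := this.le
    _ = θ * (c * a) := by ring
    _ ≤ _ := by gcongr

end Ctx
end
end CSU


namespace CSU
section
variable {V : Type u} [NormedAddCommGroup V] [NormedSpace ℝ V]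
namespace Ctx
variable {K : Set V} {F : V → V} {F' : V → V →L[ℝ] V} {Ω : Set V} {e : V}
    {f : V →L[ℝ] ℝ} (h : Ctx K F F' Ω e f)
include h

theorem ucont {W : Type*} [PseudoMetricSpace W] {g : V → W} (hg : Continuous g) {η : ℝ}
    (hη : 0 < η) : ∃ δ : ℝ, 0 < δ ∧ ∀ z ∈ Ω, ∀ w, dist z w < δ → dist (g z) (g w) < η := by
  have := h.Oc.uniformContinuousAt_of_continuousAt g (fun a _ => hg.continuousAt)
    (Metric.dist_mem_uniformity hη)
  obtain ⟨δ, hδ, hh⟩ := Metric.mem_uniformity_dist.1 this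
  exact ⟨δ, hδ, fun z hz w hw => hh hw hz⟩

theorem udiff (N : ℕ) {η : ℝ} (hη : 0 < η) : ∃ δ : ℝ, 0 < δ ∧ ∀ z ∈ Ω, ∀ w, ‖w - z‖ ≤ δ →
    ‖F^[N] w - F^[N] z - D F F' N z (w - z)‖ ≤ η * ‖w - z‖ := by
  obtain ⟨δ, hδ, hh⟩ := h.ucont (h.Dcont N) hη
  refine ⟨δ / 2, by positivity, fun z hz w hw => ?_⟩
  refine (convex_closedBall z (δ / 2)).norm_image_sub_le_of_norm_hasFDerivWithin_le'
    (f' := D F F' N) (fun x _ => (h.Dderiv N x).hasFDerivWithinAt) (fun x hx => ?_)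
    (Metric.mem_closedBall_self (by positivity)) (by rwa [Metric.mem_closedBall, dist_eq_norm])
  rw [← dist_eq_norm, dist_comm]
  refine (hh z hz x ?_).le
  rw [dist_comm]
  exact lt_of_le_of_lt hx (by linarith)

theorem H6 (κ : ℝ) (hκ : 0 < κ) : ∃ N : ℕ, 1 ≤ N ∧ ∃ δ : ℝ, 0 < δ ∧ ∀ z ∈ Ω, ∀ w : V,
    ‖w - z‖ ≤ δ → F^[N] w - F^[N] z ∉ interior K → F^[N] z - F^[N] w ∉ interior K →
    ‖F^[N] w - F^[N] z‖ ≤ κ * f (D F F' N z e) * ‖w - z‖ := by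
  obtain ⟨R, c, c0, hR, hc, hc0, H⟩ := h.H2
  obtain ⟨C, hC, hC'⟩ := h.C1
  obtain ⟨cl, Cu, B, hcl, hCu, -, hL⟩ := h.L1
  set G := 2 * C * R / c0 + 2 with hG
  have hGp : 0 < G := by positivity
  set θ := κ / G with hθ
  have hθp : 0 < θ := by positivity
  obtain ⟨N, hN, hN'⟩ := h.H5 θ hθp
  obtain ⟨δ, hδ, hd⟩ := h.udiff N (η := θ * cl ^ N) (by positivity)
  refine ⟨N, hN, δ, hδ, fun z hz w hw hn1 hn2 => ?_⟩
  have hdd := hd z hz w hw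
  have hap := h.apow hcl (fun z hz => (hL z hz).1) N z hz
  have ha := h.apos N hz
  obtain ⟨g1, -, -, g4, -⟩ := H z hz N
  set a := f (D F F' N z e) with hadef
  set d := w - z with hddef
  by_cases h0 : d = 0
  · have : w = z := sub_eq_zero.1 h0
    simp [this, h0]
  set t := ‖d‖ with ht
  have htp : 0 < t := norm_pos_iff.2 h0
  obtain ⟨α, hα⟩ := hN' z hz (t⁻¹ • d) (by
    rw [norm_smul, norm_inv, Real.norm_of_nonneg htp.le, ← ht, inv_mul_cancel₀ htp.ne'])
  set y := F^[N] w - F^[N] z with hy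
  set ρ := y - (t * α) • D F F' N z e with hρ
  have hρn : ‖ρ‖ ≤ 2 * θ * a * t := by
    have e1 : ρ = (y - D F F' N z d) + t • (D F F' N z (t⁻¹ • d) - α • D F F' N z e) := by
      rw [hρ, map_smul, smul_sub, smul_smul, mul_inv_cancel₀ htp.ne']
      module
    rw [e1]
    refine (norm_add_le _ _).trans ?_
    rw [norm_smul, Real.norm_of_nonneg htp.le]
    have : θ * cl ^ N * t ≤ θ * a * t := by gcongr
    have : t * ‖D F F' N z (t⁻¹ • d) - α • D F F' N z e‖ ≤ t * (θ * a) := by gcongr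
    linarith
  have hαb : |α| * c0 ≤ C * (2 * θ) := by
    by_contra! hlt
    have hlt' : C * ‖ρ‖ < t * |α| * (c0 * a) := by
      calc C * ‖ρ‖ ≤ C * (2 * θ * a * t) := by gcongr
        _ = (C * (2 * θ)) * (a * t) := by ring
        _ < (|α| * c0) * (a * t) := by gcongr
        _ = _ := by ring
    have hg := h.smul _ g4 (t * |α|) (by positivity)
    rcases le_total 0 α with hs | hs
    · rw [abs_of_nonneg hs] at hlt' hg
      apply hn1
      have := int_add h.add (h.C1int hC' hlt') hg
      convert this using 1
      rw [hρ]; module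
    · rw [abs_of_nonpos hs] at hlt' hg
      apply hn2
      rw [← norm_neg] at hlt'
      have := int_add h.add (h.C1int hC' hlt') hg
      convert this using 1
      rw [← neg_sub, ← hy, hρ]; module
  have hαb' : |α| ≤ C * (2 * θ) / c0 := by rwa [le_div_iff₀ hc0]
  have e2 : y = ρ + (t * α) • D F F' N z e := by rw [hρ]; module
  rw [e2]
  refine (norm_add_le _ _).trans ?_
  rw [norm_smul, norm_mul, Real.norm_of_nonneg htp.le, Real.norm_eq_abs]
  calc _ ≤ 2 * θ * a * t + t * (C * (2 * θ) / c0) * (R * a) := by gcongr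
    _ = (G * θ) * a * t := by rw [hG]; field_simp; ring
    _ = κ * a * t := by rw [hθ, mul_div_cancel₀ _ hGp.ne']

theorem H7 {z : V} (hz : z ∈ Ω) {A : ℝ} (hA : ∀ n, f (D F F' n z e) ≤ A) :
    ∃ δ : ℝ, 0 < δ ∧ ∀ w : V, ‖w - z‖ < δ →
    (∀ n, F^[n] w - F^[n] z ∉ interior K ∧ F^[n] z - F^[n] w ∉ interior K) →
    Tendsto (fun n => dist (F^[n] z) (F^[n] w)) atTop (𝓝 0) := by
  obtain ⟨R, c, c0, hR, hc, hc0, H⟩ := h.H2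
  obtain ⟨N, hN, δ, hδ, H6⟩ := h.H6 (c0 / 2) (by positivity)
  have hA0 : 0 < A := lt_of_lt_of_le (h.apos 0 hz) (hA 0)
  refine ⟨δ / A, by positivity, fun w hw hun => ?_⟩
  rw [lt_div_iff₀ hA0] at hw
  have key : ∀ j : ℕ, ‖F^[N * j] w - F^[N * j] z‖ ≤
      (1 / 2) ^ j * f (D F F' (N * j) z e) * ‖w - z‖ := by
    intro j
    induction j with
    | zero => simp [D, h.fe]
    | succ j ih =>
      have haj := h.apos (N * j) hz
      have hle : (1 / 2 : ℝ) ^ j ≤ 1 := pow_le_one₀ (by norm_num) (by norm_num)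
      have hsm : ‖F^[N * j] w - F^[N * j] z‖ ≤ δ := by
        refine ih.trans ?_
        calc _ ≤ 1 * A * ‖w - z‖ := by gcongr; exact hA _
          _ ≤ δ := by linarith
      have e1 : N * (j + 1) = N + N * j := by ring
      have e2 : ∀ y : V, F^[N] (F^[N * j] y) = F^[N * (j + 1)] y := by
        intro y; rw [e1, iterate_add_apply]
      have h1 := H6 (F^[N * j] z) (h.Oit hz _) (F^[N * j] w) hsm
        (by rw [e2, e2]; exact (hun _).1) (by rw [e2, e2]; exact (hun _).2)
      rw [e2, e2] at h1
      have h2 := h.H3 N (H z hz (N * j)).2.2.2.1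
      rw [← e1] at h2
      have haN := h.apos N (h.Oit hz (N * j))
      calc _ ≤ _ := h1
        _ ≤ c0 / 2 * f (D F F' N (F^[N * j] z) e) *
            ((1 / 2) ^ j * f (D F F' (N * j) z e) * ‖w - z‖) := by gcongr
        _ = (1 / 2) ^ (j + 1) * (c0 * f (D F F' (N * j) z e) * f (D F F' N (F^[N * j] z) e))
            * ‖w - z‖ := by ring
        _ ≤ _ := by gcongr
  have hlim : Tendsto (fun j : ℕ => ‖F^[N * j] w - F^[N * j] z‖) atTop (𝓝 0) := by
    have h1 : Tendsto (fun j : ℕ => (1 / 2 : ℝ) ^ j * (A * ‖w - z‖)) atTop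
        (𝓝 (0 * (A * ‖w - z‖))) :=
      (tendsto_pow_atTop_nhds_zero_of_lt_one (by norm_num) (by norm_num)).mul_const _
    rw [zero_mul] at h1
    refine squeeze_zero (fun _ => norm_nonneg _) (fun j => (key j).trans ?_) h1
    rw [mul_assoc]
    gcongr
    exact hA _
  rw [Metric.tendsto_atTop]
  intro ε hε
  have h2 : ∀ i : ℕ, ∀ᶠ j in atTop, dist (F^[i] (F^[N * j] z)) (F^[i] (F^[N * j] w)) < ε := by
    intro i
    obtain ⟨η, hη, hh⟩ := h.ucont (h.Fcont.iterate i) hε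
    filter_upwards [hlim.eventually_lt_const hη] with j hj
    refine hh _ (h.Oit hz _) _ ?_
    rwa [dist_comm, dist_eq_norm]
  have h3 : ∀ᶠ j in atTop, ∀ i ∈ Finset.range N,
      dist (F^[i] (F^[N * j] z)) (F^[i] (F^[N * j] w)) < ε :=
    (Finset.eventually_all _).2 fun i _ => h2 i
  obtain ⟨J, hJ⟩ := eventually_atTop.1 h3
  refine ⟨N * J, fun n hn => ?_⟩
  have h4 := hJ (n / N) ((Nat.le_div_iff_mul_le (by omega)).2 (by linarith)) (n % N)
    (Finset.mem_range.2 (Nat.mod_lt _ (by omega)))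
  rw [← iterate_add_apply, ← iterate_add_apply, Nat.mod_add_div] at h4
  simpa using h4

theorem abound_shift {z : V} (hz : z ∈ Ω) {A : ℝ} (hA : ∀ n, f (D F F' n z e) ≤ A) (k : ℕ) :
    ∃ A', ∀ n, f (D F F' n (F^[k] z) e) ≤ A' := by
  obtain ⟨R, c, c0, hR, hc, hc0, H⟩ := h.H2
  have ha := h.apos k hz
  refine ⟨A / (c0 * f (D F F' k z e)), fun n => ?_⟩
  have h2 := h.H3 n (H z hz k).2.2.2.1
  rw [le_div_iff₀ (by positivity)]
  linarith [hA (n + k)]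

theorem Dpow {z : V} {p : ℕ} (hp : F^[p] z = z) (n : ℕ) :
    D F F' (p * n) z = (D F F' p z) ^ n := by
  induction n with
  | zero => rfl
  | succ n ih =>
    ext v
    have hit : F^[p * n] z = z := by
      rw [iterate_mul]; exact iterate_fixed hp n
    rw [Nat.mul_succ, add_comm, D_add, hit, ih, pow_succ']
    rfl

theorem spec {z : V} (hz : z ∈ Ω) {A : ℝ} (hA : ∀ n, f (D F F' n z e) ≤ A) {p : ℕ}
    (hp : F^[p] z = z) : spectralRadius ℝ (D F F' p z) ≤ 1 := by
  have := h.cs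
  obtain ⟨R, hR, H4⟩ := h.H4
  have hA0 : 0 < A := lt_of_lt_of_le (h.apos 0 hz) (hA 0)
  refine iSup₂_le fun l hl => ?_
  by_contra! hlt
  have hl1 : 1 < ‖l‖ := by
    have : (1 : NNReal) < ‖l‖₊ := by exact_mod_cast hlt
    exact_mod_cast this
  have hb : ∀ n : ℕ, ‖l‖ ^ n ≤ R * A * ‖(1 : V →L[ℝ] V)‖ := by
    intro n
    have h1 := spectrum.pow_mem_pow _ n hl
    have h2 := spectrum.norm_le_norm_mul_of_mem h1
    rw [norm_pow, ← h.Dpow hp] at h2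
    refine h2.trans ?_
    gcongr
    refine ContinuousLinearMap.opNorm_le_bound _ (by positivity) fun v => ?_
    refine (H4 z hz _ v).trans ?_
    gcongr
    exact hA _
  obtain ⟨n, hn⟩ := ((tendsto_pow_atTop_atTop_of_one_lt hl1).eventually_gt_atTop
    (R * A * ‖(1 : V →L[ℝ] V)‖)).exists
  exact absurd (hb n) (not_le.2 hn)

/-- if no iterate expands at `z`, the derivative growth is bounded -/
theorem bounded_of_not_expanding {z : V} (hz : z ∈ Ω)
    (hne : ∀ n, 1 ≤ n → D F F' n z e - (2 : ℝ) • e ∉ interior K) :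
    ∃ A, ∀ n, f (D F F' n z e) ≤ A := by
  obtain ⟨R, c, c0, hR, hc, hc0, H⟩ := h.H2
  refine ⟨max 1 (2 / c0), fun n => ?_⟩
  cases n with
  | zero => simp [D, h.fe]
  | succ n =>
    refine le_trans ?_ (le_max_right _ _)
    by_contra! hlt
    rw [div_lt_iff₀ hc0] at hlt
    apply hne (n + 1) (by omega)
    have h1 := (H z hz (n + 1)).2.2.2.1
    have h2 := int_smul h.smul (t := c0 * f (D F F' (n + 1) z e) - 2) (by linarith) h.eint
    have := int_add h.add h2 h1
    convert this using 1
    module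

end Ctx
end
end CSU


namespace CSU
section
variable {V : Type u} [NormedAddCommGroup V] [NormedSpace ℝ V]

theorem int_neg {K : Set V} : interior (-K) = -interior K :=
  ((Homeomorph.neg V).preimage_interior K).symm

theorem omega_mem {F : V → V} {x z : V} : z ∈ omegaSet F x ↔
    ∀ ε : ℝ, 0 < ε → ∀ N : ℕ, ∃ n, N ≤ n ∧ dist (F^[n] x) z < ε := by
  unfold omegaSet semiOrbit
  simp only [mem_iInter, Metric.mem_closure_iff]
  constructor
  · intro h ε hε N
    obtain ⟨b, ⟨n, rfl⟩, hb⟩ := h N ε hε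
    refine ⟨n + N, by omega, ?_⟩
    rw [iterate_add_apply, dist_comm]; exact hb
  · intro h N ε hε
    obtain ⟨n, hn, hd⟩ := h ε hε N
    refine ⟨F^[n] x, ⟨n - N, ?_⟩, by rw [dist_comm]; exact hd⟩
    rw [← iterate_add_apply, Nat.sub_add_cancel hn]

theorem omega_open {F : V → V} {x z : V} (hz : z ∈ omegaSet F x) {U : Set V} (hU : IsOpen U)
    (hzU : z ∈ U) (N : ℕ) : ∃ n, N ≤ n ∧ F^[n] x ∈ U := by
  obtain ⟨ε, hε, hb⟩ := Metric.isOpen_iff.1 hU z hzU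
  obtain ⟨n, hn, hd⟩ := omega_mem.1 hz ε hε N
  exact ⟨n, hn, hb hd⟩

theorem omega_seq {F : V → V} {x z : V} {φ : ℕ → ℕ} (hφ : Tendsto φ atTop atTop)
    (ht : Tendsto (fun n => F^[φ n] x) atTop (𝓝 z)) : z ∈ omegaSet F x := by
  rw [omega_mem]
  intro ε hε N
  obtain ⟨n, h1, h2⟩ := ((Metric.tendsto_nhds.1 ht ε hε).and (hφ.eventually_ge_atTop N)).exists
  exact ⟨φ n, h2, h1⟩

theorem omega_subset {F : V → V} {x : V} : omegaSet F x ⊆ closure (semiOrbit F x) := by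
  intro z hz
  have := mem_iInter.1 hz 0
  simpa using this

theorem omega_closed {F : V → V} {x : V} : IsClosed (omegaSet F x) :=
  isClosed_iInter fun _ => isClosed_closure

theorem orb_mem {F : V → V} {x : V} (n : ℕ) : F^[n] x ∈ closure (semiOrbit F x) :=
  subset_closure ⟨n, rfl⟩

theorem omega_compact {F : V → V} {x : V} (hc : IsCompact (closure (semiOrbit F x))) :
    IsCompact (omegaSet F x) := hc.of_isClosed_subset omega_closed omega_subset

theorem omega_nonempty {F : V → V} {x : V} (hc : IsCompact (closure (semiOrbit F x))) :
    (omegaSet F x).Nonempty := by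
  obtain ⟨a, _, φ, hφ, ht⟩ := hc.tendsto_subseq (x := fun n => F^[n] x) (fun n => orb_mem n)
  exact ⟨a, omega_seq hφ.tendsto_atTop ht⟩

theorem omega_inv {F : V → V} (hF : Continuous F) {x z : V} (hz : z ∈ omegaSet F x) :
    F z ∈ omegaSet F x := by
  rw [omega_mem]
  intro ε hε N
  obtain ⟨n, hn, hd⟩ := omega_open hz (U := F ⁻¹' Metric.ball (F z) ε)
    (Metric.isOpen_ball.preimage hF) (by simpa using hε) N
  refine ⟨n + 1, by omega, ?_⟩
  rw [iterate_succ_apply']; exact hd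

theorem omega_invn {F : V → V} (hF : Continuous F) {x z : V} (hz : z ∈ omegaSet F x) (n : ℕ) :
    F^[n] z ∈ omegaSet F x := by
  induction n with
  | zero => exact hz
  | succ n ih => rw [iterate_succ_apply']; exact omega_inv hF ih

theorem omega_ev {F : V → V} {x : V} (hc : IsCompact (closure (semiOrbit F x))) {U : Set V}
    (hU : IsOpen U) (hs : omegaSet F x ⊆ U) : ∃ N, ∀ n, N ≤ n → F^[n] x ∈ U := by
  by_contra hcon
  push Not at hcon
  have hfr : ∃ᶠ n in atTop, F^[n] x ∈ closure (semiOrbit F x) ∩ Uᶜ := by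
    rw [frequently_atTop]
    intro N
    obtain ⟨n, hn, hx⟩ := hcon N
    exact ⟨n, hn, orb_mem n, hx⟩
  obtain ⟨a, ha, φ, hφ, ht⟩ := (hc.inter_right hU.isClosed_compl).tendsto_subseq' hfr
  exact ha.2 (hs (omega_seq hφ.tendsto_atTop ht))

theorem cycle_eq {F : V → V} (hF : Continuous F) {x q : V} {p M : ℕ} (hp : 1 ≤ p)
    (hq : F^[p] q = q)
    (hd : Tendsto (fun n => dist (F^[n + M] x) (F^[n] q)) atTop (𝓝 0)) :
    omegaSet F x = semiOrbit F q := by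
  have hqp : ∀ k, F^[p * k] q = q := by
    intro k
    rw [iterate_mul]
    exact iterate_fixed hq k
  have hqm : ∀ n, F^[n] q = F^[n % p] q := by
    intro n
    conv_lhs => rw [← Nat.mod_add_div n p, iterate_add_apply, hqp]
  have hfin : (semiOrbit F q) = (fun n => F^[n] q) '' (Iio p) := by
    ext y
    constructor
    · rintro ⟨n, rfl⟩
      exact ⟨n % p, Nat.mod_lt _ hp, (hqm n).symm⟩
    · rintro ⟨n, _, rfl⟩
      exact ⟨n, rfl⟩
  have hcl : IsClosed (semiOrbit F q) := by
    rw [hfin]; exact ((finite_Iio p).image _).isClosed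
  have hqO : q ∈ omegaSet F x := by
    rw [omega_mem]
    intro ε hε N
    obtain ⟨n0, hn0⟩ := eventually_atTop.1 (hd.eventually (gt_mem_nhds hε))
    refine ⟨p * (N + n0) + M, ?_, ?_⟩
    · nlinarith
    · have := hn0 (p * (N + n0)) (by nlinarith)
      rwa [hqp] at this
  apply Subset.antisymm
  · intro z hz
    rw [← hcl.closure_eq, Metric.mem_closure_iff]
    intro ε hε
    obtain ⟨n0, hn0⟩ := eventually_atTop.1 (hd.eventually (gt_mem_nhds (half_pos hε)))
    obtain ⟨n, hn, hdz⟩ := omega_mem.1 hz (ε/2) (half_pos hε) (n0 + M)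
    have := hn0 (n - M) (by omega)
    rw [Nat.sub_add_cancel (by omega)] at this
    refine ⟨_, ⟨n - M, rfl⟩, ?_⟩
    have h3 := dist_triangle_left z (F^[n - M] q) (F^[n] x)
    linarith
  · rintro z ⟨n, rfl⟩
    exact omega_invn hF hqO n

/-- monotone package -/
structure Mon (K : Set V) (F : V → V) : Prop where
  closed : IsClosed K
  smul : ∀ v ∈ K, ∀ t : ℝ, 0 ≤ t → t • v ∈ K
  add : ∀ v ∈ K, ∀ w ∈ K, v + w ∈ K
  anti : ∀ v ∈ K, -v ∈ K → v = 0
  zero : (0 : V) ∈ K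
  zint : (0 : V) ∉ interior K
  cont : Continuous F
  str : ∀ x y, y - x ∈ K → x ≠ y → F y - F x ∈ interior K

namespace Mon
variable {K : Set V} {F : V → V} (h : Mon K F)
include h

theorem it {x y : V} (hxy : y - x ∈ K) (n : ℕ) : F^[n] y - F^[n] x ∈ K := by
  induction n with
  | zero => exact hxy
  | succ n ih =>
    rw [iterate_succ_apply', iterate_succ_apply']
    by_cases he : F^[n] x = F^[n] y
    · rw [he, sub_self]; exact h.zero
    · exact interior_subset (h.str _ _ ih he)

theorem itint {x y : V} (hxy : y - x ∈ interior K) (n : ℕ) :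
    F^[n] y - F^[n] x ∈ interior K := by
  induction n with
  | zero => exact hxy
  | succ n ih =>
    rw [iterate_succ_apply', iterate_succ_apply']
    refine h.str _ _ (interior_subset ih) ?_
    intro he
    rw [he, sub_self] at ih
    exact h.zint ih

theorem trans {x y z : V} (h1 : y - x ∈ K) (h2 : z - y ∈ K) : z - x ∈ K := by
  have := h.add _ h1 _ h2
  have e : y - x + (z - y) = z - x := by abel
  rwa [e] at this

/-- monotone sequence with values in a compact set converges -/
theorem conv {S : Set V} (hS : IsCompact S) {u : ℕ → V} (hu : ∀ n, u n ∈ S)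
    (hm : ∀ n, u (n + 1) - u n ∈ K) : ∃ a, Tendsto u atTop (𝓝 a) := by
  have hmm : ∀ n k, u (n + k) - u n ∈ K := by
    intro n k
    induction k with
    | zero => simpa using h.zero
    | succ k ih => exact h.trans ih (hm _)
  have hmm' : ∀ n k, n ≤ k → u k - u n ∈ K := by
    intro n k hnk
    have := hmm n (k - n)
    rwa [Nat.add_sub_cancel' hnk] at this
  have hle : ∀ b, ∀ φ : ℕ → ℕ, Tendsto φ atTop atTop → Tendsto (u ∘ φ) atTop (𝓝 b) →
      ∀ n, b - u n ∈ K := by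
    intro b φ hφ ht n
    refine h.closed.mem_of_tendsto (ht.sub_const (u n)) ?_
    filter_upwards [hφ.eventually_ge_atTop n] with k hk
    exact hmm' _ _ hk
  have hle2 : ∀ a b, ∀ φ ψ : ℕ → ℕ, Tendsto φ atTop atTop → Tendsto (u ∘ φ) atTop (𝓝 a) →
      Tendsto ψ atTop atTop → Tendsto (u ∘ ψ) atTop (𝓝 b) → b - a ∈ K := by
    intro a b φ ψ hφ ha hψ hb
    exact h.closed.mem_of_tendsto (tendsto_const_nhds.sub ha)
      (Eventually.of_forall fun n => hle b ψ hψ hb _)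
  obtain ⟨a, _, φ, hφ, ht⟩ := hS.tendsto_subseq hu
  refine ⟨a, tendsto_of_subseq_tendsto ?_⟩
  intro ns hns
  obtain ⟨b, _, ψ, hψ, htb⟩ := hS.tendsto_subseq (x := u ∘ ns) (fun n => hu _)
  refine ⟨ψ, ?_⟩
  have hψ' : Tendsto (ns ∘ ψ) atTop atTop := hns.comp hψ.tendsto_atTop
  have h1 := hle2 a b φ _ hφ.tendsto_atTop ht hψ' htb
  have h2 := hle2 b a _ φ hψ' htb hφ.tendsto_atTop ht
  have : b = a := sub_eq_zero.1 (h.anti _ h1 (by simpa using h2))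
  rw [this] at htb
  exact htb

theorem neg : Mon (-K) F where
  closed := h.closed.neg
  smul v hv t ht := by
    have := h.smul _ hv t ht
    simpa using this
  add v hv w hw := by
    have := h.add _ hv _ hw
    rw [Set.mem_neg, neg_add]
    exact this
  anti v hv hv' := h.anti v (by simpa using hv') (by simpa using hv)
  zero := by simpa using h.zero
  zint := by
    intro h0
    apply h.zint
    rw [int_neg] at h0
    simpa using h0
  cont := h.cont
  str x y hxy hne := by
    rw [int_neg, Set.mem_neg, neg_sub]
    exact h.str _ _ (by simpa using hxy) hne.symm

theorem cyc0 {x : V} (hc : IsCompact (closure (semiOrbit F x))) {i p : ℕ} (hp : 1 ≤ p)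
    (hi : F^[i + p] x - F^[i] x ∈ K) :
    ∃ q p, 1 ≤ p ∧ F^[p] q = q ∧ omegaSet F x = semiOrbit F q := by
  have hm : ∀ n, F^[p * (n + 1) + i] x - F^[p * n + i] x ∈ K := by
    intro n
    have := h.it hi (p * n)
    rw [← iterate_add_apply, ← iterate_add_apply] at this
    have e : p * (n + 1) + i = p * n + (i + p) := by ring
    rw [e]; exact this
  obtain ⟨q, hq⟩ := h.conv hc (u := fun n => F^[p * n + i] x) (fun n => orb_mem _) hm
  have hr : ∀ r, Tendsto (fun n => F^[p * n + i + r] x) atTop (𝓝 (F^[r] q)) := by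
    intro r
    have := ((h.cont.iterate r).tendsto q).comp hq
    refine this.congr fun n => ?_
    simp only [comp]
    rw [← iterate_add_apply, add_comm]
  have hqq : F^[p] q = q := by
    refine tendsto_nhds_unique (hr p) ?_
    have := hq.comp (tendsto_add_atTop_nat 1)
    refine this.congr fun n => ?_
    have e : p * (n + 1) + i = p * n + i + p := by ring
    simp only [comp]
    rw [e]
  refine ⟨q, p, hp, hqq, cycle_eq h.cont hp hqq (M := i) ?_⟩
  have hqp : ∀ k, F^[p * k] q = q := by
    intro k
    rw [iterate_mul]
    exact iterate_fixed hqq k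
  rw [Metric.tendsto_atTop]
  intro ε hε
  have hall : ∀ᶠ n in atTop, ∀ r ∈ Finset.range p, dist (F^[p * n + i + r] x) (F^[r] q) < ε := by
    rw [Filter.eventually_all_finset]
    intro r _
    exact Metric.tendsto_nhds.1 (hr r) ε hε
  obtain ⟨N, hN⟩ := eventually_atTop.1 hall
  refine ⟨p * N, fun n hn => ?_⟩
  have h1 : N ≤ n / p := (Nat.le_div_iff_mul_le hp).2 (by rw [mul_comm]; exact hn)
  have h2 := hN _ h1 (n % p) (Finset.mem_range.2 (Nat.mod_lt _ hp))
  have e1 : p * (n / p) + i + n % p = n + i := by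
    have := Nat.mod_add_div n p; omega
  have e2 : F^[n] q = F^[n % p] q := by
    conv_lhs => rw [← Nat.mod_add_div n p, iterate_add_apply, hqp]
  rw [e1, ← e2] at h2
  simpa using h2

theorem cyc {x : V} (hc : IsCompact (closure (semiOrbit F x))) {i j : ℕ}
    (hi : F^[i] x - F^[j] x ∈ interior K) :
    ∃ q p, 1 ≤ p ∧ F^[p] q = q ∧ omegaSet F x = semiOrbit F q := by
  rcases lt_trichotomy i j with hij | hij | hij
  · refine h.neg.cyc0 hc (i := i) (p := j - i) (by omega) ?_
    rw [Nat.add_sub_cancel' hij.le, Set.mem_neg, neg_sub]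
    exact interior_subset hi
  · rw [hij, sub_self] at hi; exact absurd hi h.zint
  · refine h.cyc0 hc (i := j) (p := i - j) (by omega) ?_
    rw [Nat.add_sub_cancel' hij.le]
    exact interior_subset hi

/-- two strongly ordered points in the limit set give a cycle -/
theorem cyc2 {x : V} (hc : IsCompact (closure (semiOrbit F x))) {a : V} {j : ℕ}
    (ha : a ∈ omegaSet F x) (hi : F^[j] x - a ∈ interior K) :
    ∃ q p, 1 ≤ p ∧ F^[p] q = q ∧ omegaSet F x = semiOrbit F q := by
  obtain ⟨n, _, hn⟩ := omega_open ha (U := (fun v => F^[j] x - v) ⁻¹' interior K)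
    (isOpen_interior.preimage (by fun_prop)) hi 0
  exact h.cyc hc hn

theorem cyc3 {x : V} (hc : IsCompact (closure (semiOrbit F x))) {a b : V}
    (ha : a ∈ omegaSet F x) (hb : b ∈ omegaSet F x) (hi : b - a ∈ interior K) : False := by
  obtain ⟨n, _, hn⟩ := omega_open hb (U := (fun v => v - a) ⁻¹' interior K)
    (isOpen_interior.preimage (by fun_prop)) hi 0
  obtain ⟨q, p, hp, hq, hO⟩ := h.cyc2 hc ha hn
  rw [hO] at ha hb
  obtain ⟨k, rfl⟩ := ha
  obtain ⟨l, rfl⟩ := hb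
  have hqk : ∀ n k, F^[p * n] (F^[k] q) = F^[k] q := by
    intro n k
    rw [← iterate_add_apply, add_comm, iterate_add_apply, iterate_mul, iterate_fixed hq]
  -- `F^[l] q = F^[m] (F^[k] q)`
  obtain ⟨m, hm⟩ : ∃ m, F^[l] q = F^[m] (F^[k] q) := by
    refine ⟨p * k - k + l, ?_⟩
    have hk : k ≤ p * k := by nlinarith
    rw [← iterate_add_apply]
    have : p * k - k + l + k = p * k + l := by omega
    rw [this, iterate_add_apply, hqk]
  rw [hm] at hi
  set z := F^[k] q with hz
  have hmz : ∀ n, F^[m * n + m] z - z ∈ interior K := by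
    intro n
    induction n with
    | zero => simpa using hi
    | succ n ih =>
      have h1 := h.it (interior_subset ih) m
      rw [← iterate_add_apply] at h1
      have := int_add h.add hi h1
      have e : m + (m * n + m) = m * (n + 1) + m := by ring
      rw [e] at this
      convert this using 1
      abel
  have := hmz (p - 1)
  have e : m * (p - 1) + m = p * m := by
    obtain ⟨r, rfl⟩ := Nat.exists_eq_add_of_le hp
    simp; ring
  rw [e, hz, hqk, sub_self] at this
  exact h.zint this

end Mon
end
end CSU


namespace CSU
section
variable {V : Type u} [NormedAddCommGroup V] [NormedSpace ℝ V]

theorem caseB {K : Set V} {F : V → V} {F' : V → V →L[ℝ] V} {x e : V} {f : V →L[ℝ] ℝ}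
    (h : Ctx K F F' (omegaSet F x) e f) (m : Mon K F)
    (hc : IsCompact (closure (semiOrbit F x))) {z : V} (hz : z ∈ omegaSet F x)
    (hne : ∀ n, 1 ≤ n → D F F' n z e - (2:ℝ) • e ∉ interior K) :
    IsLinearlyStableCycle F (omegaSet F x) := by
  obtain ⟨A, hA⟩ := h.bounded_of_not_expanding hz hne
  obtain ⟨δ, hδ, hH⟩ := h.H7 hz hA
  have inner : ∀ N, ‖F^[N] x - z‖ < δ →
      (∃ q p, 1 ≤ p ∧ F^[p] q = q ∧ omegaSet F x = semiOrbit F q) ∨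
      Tendsto (fun n => dist (F^[n] z) (F^[n + N] x)) atTop (𝓝 0) := by
    intro N hN
    by_cases hall : ∀ n, F^[n] (F^[N] x) - F^[n] z ∉ interior K ∧
        F^[n] z - F^[n] (F^[N] x) ∉ interior K
    · right
      have := hH _ hN hall
      refine this.congr fun n => ?_
      rw [iterate_add_apply]
    · left
      push Not at hall
      obtain ⟨n, hn⟩ := hall
      by_cases h1 : F^[n] (F^[N] x) - F^[n] z ∈ interior K
      · rw [← iterate_add_apply] at h1
        exact m.cyc2 hc (omega_invn m.cont hz n) h1
      · have h2 := hn h1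
        refine m.neg.cyc2 hc (j := n + N) (omega_invn m.cont hz n) ?_
        rw [int_neg, Set.mem_neg, neg_sub, iterate_add_apply]
        exact h2
  have hcyc : ∃ q p, 1 ≤ p ∧ F^[p] q = q ∧ omegaSet F x = semiOrbit F q := by
    obtain ⟨M, _, hM⟩ := omega_mem.1 hz δ hδ 0
    obtain ⟨M', hMM, hM'⟩ := omega_mem.1 hz δ hδ (M + 1)
    rw [dist_eq_norm] at hM hM'
    rcases inner M hM with h1 | h1
    · exact h1
    rcases inner M' hM' with h2 | h2
    · exact h2
    obtain ⟨p, rfl⟩ := Nat.exists_eq_add_of_le hMM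
    have h3 : Tendsto (fun n => dist (F^[n + M] x) (F^[n + (M + 1 + p)] x)) atTop (𝓝 0) := by
      have := h1.add h2
      rw [add_zero] at this
      exact squeeze_zero (fun n => dist_nonneg) (fun n => dist_triangle_left _ _ _) this
    have hfix : F^[p + 1] z = z := by
      by_contra hcon
      have hg : Continuous fun w => dist w (F^[p + 1] w) :=
        continuous_id.dist (m.cont.iterate _)
      have hpos : 0 < dist z (F^[p + 1] z) := dist_pos.2 (Ne.symm hcon)
      obtain ⟨n0, hn0⟩ := eventually_atTop.1 (h3.eventually (gt_mem_nhds (half_pos hpos)))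
      obtain ⟨n, hn, hU⟩ := omega_open hz
        (U := {w | dist z (F^[p + 1] z) / 2 < dist w (F^[p + 1] w)})
        (isOpen_lt continuous_const hg) (half_lt_self hpos) (n0 + M)
      have := hn0 (n - M) (by omega)
      rw [Nat.sub_add_cancel (by omega)] at this
      have e1 : n - M + (M + 1 + p) = p + 1 + n := by omega
      rw [e1, iterate_add_apply] at this
      have hU' : dist z (F^[p + 1] z) / 2 < dist (F^[n] x) (F^[p + 1] (F^[n] x)) := hU
      linarith
    refine ⟨z, p + 1, by omega, hfix, cycle_eq m.cont (by omega) hfix (M := M) ?_⟩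
    refine h1.congr fun n => dist_comm _ _
  obtain ⟨q, p, hp, hq, hO⟩ := hcyc
  have hper : IsPeriodicPt F p q := hq
  set P := minimalPeriod F q with hP
  have hPpos : 0 < P := hper.minimalPeriod_pos hp
  have hPq : F^[P] q = q := iterate_minimalPeriod
  have hqk : ∀ n k, F^[P * n] (F^[k] q) = F^[k] q := by
    intro n k
    rw [← iterate_add_apply, add_comm, iterate_add_apply, iterate_mul, iterate_fixed hPq]
  refine ⟨q, P, ⟨hPpos, hPq, ?_⟩, hO, ?_⟩
  · intro l hl hlP he
    have : P ≤ l := IsPeriodicPt.minimalPeriod_le hl he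
    omega
  · intro w hw
    refine ⟨D F F' P w, h.Dderiv P w, ?_⟩
    have hwO : w ∈ omegaSet F x := by rw [hO]; exact hw
    obtain ⟨k, rfl⟩ := hw
    have hz' := hz
    rw [hO] at hz'
    obtain ⟨j, hj⟩ := hz'
    have hm : F^[k] q = F^[P * j - j + k] z := by
      have hk : j ≤ P * j := by nlinarith
      rw [hj, ← iterate_add_apply]
      have : P * j - j + k + j = P * j + k := by omega
      rw [this, iterate_add_apply, hqk]
    obtain ⟨A', hA'⟩ := h.abound_shift hz hA (P * j - j + k)
    rw [← hm] at hA'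
    refine h.spec hwO hA' ?_
    simpa using hqk 1 k

theorem localExp {K : Set V} {F : V → V} {F' : V → V →L[ℝ] V} {Ω : Set V} {e : V}
    {f : V →L[ℝ] ℝ} (h : Ctx K F F' Ω e f) {z : V} {n : ℕ}
    (hn : D F F' n z e - (2:ℝ) • e ∈ interior K) :
    ∃ ε : ℝ, 0 < ε ∧ ∀ w ∈ Metric.ball z ε, ∀ s : ℝ, 0 < s → s ≤ ε →
      F^[n] (w + s • e) - F^[n] w - (2 * s) • e ∈ K := by
  have hs : HasStrictFDerivAt (F^[n]) (D F F' n z) z :=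
    hasStrictFDerivAt_of_hasFDerivAt_of_continuousAt
      (Eventually.of_forall fun y => h.Dderiv n y) (h.Dcont n).continuousAt
  obtain ⟨c, hc, hb⟩ := Metric.isOpen_iff.1 isOpen_interior _ hn
  have hc' : 0 < c / (‖e‖ + 1) := by positivity
  have h1 := hs.isLittleO.def hc'
  have ht : Tendsto (fun p : V × ℝ => (p.1 + p.2 • e, p.1)) (𝓝 (z, 0)) (𝓝 (z, z)) := by
    have hcon : Continuous (fun p : V × ℝ => (p.1 + p.2 • e, p.1)) := by fun_prop
    have := hcon.tendsto (z, 0)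
    simpa using this
  obtain ⟨ε, hε, h2⟩ := Metric.eventually_nhds_iff.1 (ht.eventually h1)
  refine ⟨ε / 2, half_pos hε, fun w hw s hs0 hse => ?_⟩
  have hd : dist (w, s) (z, (0:ℝ)) < ε := by
    rw [Prod.dist_eq, max_lt_iff]
    rw [Metric.mem_ball] at hw
    refine ⟨by simpa using by linarith, ?_⟩
    simp only [Real.dist_eq, sub_zero, abs_of_pos hs0]
    linarith
  have h3 := h2 hd
  simp only [add_sub_cancel_left, map_smul] at h3
  rw [norm_smul, Real.norm_eq_abs, abs_of_pos hs0] at h3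
  set r := F^[n] (w + s • e) - F^[n] w - s • D F F' n z e with hr
  have h4 : s⁻¹ • r + (D F F' n z e - (2:ℝ) • e) ∈ interior K := by
    apply hb
    rw [Metric.mem_ball, dist_eq_norm, add_sub_cancel_right, norm_smul, norm_inv,
      Real.norm_eq_abs, abs_of_pos hs0]
    have h5 : s⁻¹ * ‖r‖ ≤ s⁻¹ * (c / (‖e‖ + 1) * (s * ‖e‖)) := by gcongr
    have h6 : s⁻¹ * (c / (‖e‖ + 1) * (s * ‖e‖)) = c * (‖e‖ / (‖e‖ + 1)) := by
      field_simp
    have h7 : ‖e‖ / (‖e‖ + 1) < 1 := by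
      rw [div_lt_one (by positivity)]; linarith
    have h8 : c * (‖e‖ / (‖e‖ + 1)) < c * 1 := by gcongr
    linarith
  have h9 := h.smul _ (interior_subset h4) s hs0.le
  have e1 : s • (s⁻¹ • r + (D F F' n z e - (2:ℝ) • e)) =
      F^[n] (w + s • e) - F^[n] w - (2 * s) • e := by
    rw [smul_add, smul_smul, mul_inv_cancel₀ hs0.ne', one_smul, hr, smul_sub, smul_smul,
      mul_comm s 2]
    abel
  rwa [e1] at h9

theorem unifExp {K : Set V} {F : V → V} {F' : V → V →L[ℝ] V} {Ω : Set V} {e : V}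
    {f : V →L[ℝ] ℝ} (h : Ctx K F F' Ω e f)
    (hA : ∀ z ∈ Ω, ∃ n, 1 ≤ n ∧ D F F' n z e - (2:ℝ) • e ∈ interior K) :
    ∃ s0 : ℝ, 0 < s0 ∧ ∃ U : Set V, IsOpen U ∧ Ω ⊆ U ∧ ∀ w ∈ U, ∃ n, 1 ≤ n ∧
      ∀ s : ℝ, 0 < s → s ≤ s0 → F^[n] (w + s • e) - F^[n] w - (2 * s) • e ∈ K := by
  refine h.Oc.induction_on (p := fun S => ∃ s0 : ℝ, 0 < s0 ∧ ∃ U : Set V, IsOpen U ∧ S ⊆ U ∧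
    ∀ w ∈ U, ∃ n, 1 ≤ n ∧
      ∀ s : ℝ, 0 < s → s ≤ s0 → F^[n] (w + s • e) - F^[n] w - (2 * s) • e ∈ K) ?_ ?_ ?_ ?_
  · exact ⟨1, one_pos, ∅, isOpen_empty, Subset.rfl, by simp⟩
  · rintro S T hST ⟨s0, h0, U, hU, hTU, hh⟩
    exact ⟨s0, h0, U, hU, hST.trans hTU, hh⟩
  · rintro S T ⟨s0, h0, U, hU, hSU, hh⟩ ⟨s1, h1, U', hU', hTU, hh'⟩
    refine ⟨min s0 s1, lt_min h0 h1, U ∪ U', hU.union hU', union_subset_union hSU hTU, ?_⟩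
    rintro w (hw | hw)
    · obtain ⟨n, hn, hs⟩ := hh w hw
      exact ⟨n, hn, fun s hs0 hs1 => hs s hs0 (hs1.trans (min_le_left _ _))⟩
    · obtain ⟨n, hn, hs⟩ := hh' w hw
      exact ⟨n, hn, fun s hs0 hs1 => hs s hs0 (hs1.trans (min_le_right _ _))⟩
  · intro z hz
    obtain ⟨n, hn, hne⟩ := hA z hz
    obtain ⟨ε, hε, hh⟩ := localExp h hne
    exact ⟨Metric.ball z ε, mem_nhdsWithin_of_mem_nhds (Metric.ball_mem_nhds z hε), ε, hε,
      Metric.ball z ε, Metric.isOpen_ball, Subset.rfl, fun w hw => ⟨n, hn, hh w hw⟩⟩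

theorem caseA {K : Set V} {F : V → V} {F' : V → V →L[ℝ] V} {x e : V} {f : V →L[ℝ] ℝ}
    (h : Ctx K F F' (omegaSet F x) e f) (m : Mon K F)
    (hc : IsCompact (closure (semiOrbit F x)))
    (hA : ∀ z ∈ omegaSet F x, ∃ n, 1 ≤ n ∧ D F F' n z e - (2:ℝ) • e ∈ interior K) :
    ∃ s0 : ℝ, 0 < s0 ∧ ∀ y, IsCompact (closure (semiOrbit F y)) → y - x ∈ K → x ≠ y →
      ∃ η ∈ omegaSet F y, ∃ ζ ∈ omegaSet F x, η - ζ - s0 • e ∈ K := by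
  obtain ⟨s0, hs0, U, hU, hOU, hexp⟩ := unifExp h hA
  obtain ⟨k0, hk0⟩ := omega_ev hc hU hOU
  refine ⟨s0, hs0, fun y hcy hxy hne => ?_⟩
  have hstep : ∀ k, k0 ≤ k → ∀ s : ℝ, 0 < s → s ≤ s0 → F^[k] y - F^[k] x - s • e ∈ K →
      ∃ k', k ≤ k' ∧ F^[k'] y - F^[k'] x - (2 * s) • e ∈ K := by
    intro k hk s hs hss hy
    obtain ⟨n, _, hn⟩ := hexp _ (hk0 k hk)
    refine ⟨n + k, by omega, ?_⟩
    have h1 := hn s hs hss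
    have h2 := m.it (x := F^[k] x + s • e) (y := F^[k] y) (by rwa [← sub_sub]) n
    have h3 := m.add _ h1 _ h2
    rw [iterate_add_apply, iterate_add_apply]
    convert h3 using 1
    abel
  have hfreq : ∀ N, ∃ k, N ≤ k ∧ F^[k] y - F^[k] x - s0 • e ∈ K := by
    intro N
    set N' := max N k0 + 1 with hN'
    have hint : F^[N'] y - F^[N'] x ∈ interior K := by
      rw [hN', iterate_succ_apply, iterate_succ_apply]
      exact m.itint (m.str _ _ hxy hne) _
    obtain ⟨s, hs, hss, hsK⟩ : ∃ s : ℝ, 0 < s ∧ s ≤ s0 ∧ F^[N'] y - F^[N'] x - s • e ∈ K := by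
      have ht : Tendsto (fun s : ℝ => F^[N'] y - F^[N'] x - s • e) (𝓝[>] 0)
          (𝓝 (F^[N'] y - F^[N'] x)) := by
        have hcon : Continuous (fun s : ℝ => F^[N'] y - F^[N'] x - s • e) := by fun_prop
        have := hcon.tendsto 0
        simp only [zero_smul, sub_zero] at this
        exact this.mono_left nhdsWithin_le_nhds
      have h1 := ht.eventually (isOpen_interior.mem_nhds hint)
      have h2 : ∀ᶠ s : ℝ in 𝓝[>] 0, s ∈ Ioo 0 s0 := Ioo_mem_nhdsGT hs0
      obtain ⟨s, hs1, hs2⟩ := (h1.and h2).exists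
      exact ⟨s, hs2.1, hs2.2.le, interior_subset hs1⟩
    have hind : ∀ j : ℕ, ∃ k, N' ≤ k ∧ F^[k] y - F^[k] x - (min (2 ^ j * s) s0) • e ∈ K := by
      intro j
      induction j with
      | zero => exact ⟨N', le_rfl, by simpa [min_eq_left hss] using hsK⟩
      | succ j ih =>
        obtain ⟨k, hk, hK⟩ := ih
        obtain ⟨k', hk', hK'⟩ := hstep k (by omega) _ (lt_min (by positivity) hs0)
          (min_le_right _ _) hK
        refine ⟨k', hk.trans hk', ?_⟩
        have hle : min (2 ^ (j + 1) * s) s0 ≤ 2 * min (2 ^ j * s) s0 := by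
          rcases le_total (2 ^ j * s) s0 with hh | hh
          · rw [min_eq_left hh]
            refine (min_le_left _ _).trans (le_of_eq ?_)
            ring
          · rw [min_eq_right hh]
            refine (min_le_right _ _).trans ?_
            linarith
        have := m.add _ hK' _ (m.smul _ h.eK _ (sub_nonneg.2 hle))
        convert this using 1
        rw [sub_smul]; abel
    obtain ⟨j, hj⟩ := pow_unbounded_of_one_lt (s0 / s) (one_lt_two)
    obtain ⟨k, hk, hK⟩ := hind j
    rw [min_eq_right ((div_le_iff₀ hs).1 hj.le)] at hK
    exact ⟨k, by omega, hK⟩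
  have hcl : IsClosed {p : V × V | p.1 - p.2 - s0 • e ∈ K} :=
    m.closed.preimage (by fun_prop)
  have hfr : ∃ᶠ k in atTop, (F^[k] y, F^[k] x) ∈
      (closure (semiOrbit F y) ×ˢ closure (semiOrbit F x)) ∩
        {p : V × V | p.1 - p.2 - s0 • e ∈ K} := by
    rw [frequently_atTop]
    intro N
    obtain ⟨k, hk, hK⟩ := hfreq N
    exact ⟨k, hk, ⟨orb_mem k, orb_mem k⟩, hK⟩
  obtain ⟨a, ha, φ, hφ, ht⟩ := ((hcy.prod hc).inter_right hcl).tendsto_subseq' hfr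
  exact ⟨a.1, omega_seq hφ.tendsto_atTop ((continuous_fst.tendsto a).comp ht), a.2,
    omega_seq hφ.tendsto_atTop ((continuous_snd.tendsto a).comp ht), ha.2⟩

theorem mainPlus [CompleteSpace V] {K : Set V} {F : V → V} {X : Set V}
    (hK : IsConeOrder K) (hKint : (interior K).Nonempty)
    (hFc : Continuous F) (hFm : StronglyMonotoneMap K F)
    (hXopen : IsOpen X) (hXoc : OrderConvexSet K X)
    (hωc : OmegaCompactIntervals K F X) (hH3 : SmoothStronglyPositive K F)
    {x : V} (hx : x ∈ X) (hnot : ¬ IsLinearlyStableCycle F (omegaSet F x)) :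
    omegaPlus K F X x ≠ omegaSet F x := by
  obtain ⟨hcl, hconv, hsm, hadd, hanti⟩ := hK
  have h0 : (0 : V) ∈ K := by
    have : (0 : V) ∈ K ∩ -K := by rw [hanti]; rfl
    exact this.1
  have hanti' : ∀ v ∈ K, -v ∈ K → v = 0 := by
    intro v hv hv'
    have : v ∈ K ∩ -K := ⟨hv, hv'⟩
    rw [hanti] at this
    exact this
  have hsm' : ∀ v ∈ K, ∀ t : ℝ, 0 ≤ t → t • v ∈ K := by
    intro v hv t ht
    rcases ht.eq_or_lt with rfl | ht
    · simpa using h0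
    · exact hsm v hv t ht
  have hc : IsCompact (closure (semiOrbit F x)) := by
    have := (hωc x hx x hx (by simpa [coneLE] using h0)).1 x
      ⟨by simpa [coneLE] using h0, by simpa [coneLE] using h0⟩
    exact this.1
  intro heq
  by_cases hz : (0 : V) ∈ interior K
  · have hall : ∀ v : V, v ∈ K := by
      intro v
      have ht : Tendsto (fun s : ℝ => s • v) (𝓝[>] 0) (𝓝 0) := by
        have hcon : Continuous (fun s : ℝ => s • v) := by fun_prop
        have := hcon.tendsto 0
        simp only [zero_smul] at this
        exact this.mono_left nhdsWithin_le_nhds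
      obtain ⟨s, hs1, hs2⟩ := ((ht.eventually (isOpen_interior.mem_nhds hz)).and
        self_mem_nhdsWithin).exists
      have hs2 : 0 < s := hs2
      have := hsm' _ (interior_subset hs1) s⁻¹ (inv_pos.2 hs2).le
      rwa [smul_smul, inv_mul_cancel₀ hs2.ne', one_smul] at this
    obtain ⟨a, ha⟩ := omega_nonempty hc
    rw [← heq] at ha
    have := mem_iInter₂.1 ha x ⟨hx, by simpa [coneLL] using hz⟩
    have he : (⋃ y ∈ {y ∈ X | coneLT K x y ∧ coneLE K y x}, omegaSet F y) = ∅ := by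
      rw [eq_empty_iff_forall_notMem]
      intro w hw
      obtain ⟨y, hy, _⟩ := mem_iUnion₂.1 hw
      have h1 : y - x = 0 := hanti' _ (hall _) (hall _)
      exact hy.2.1.2 (sub_eq_zero.1 h1).symm
    rw [he, closure_empty] at this
    exact this
  have m : Mon K F := ⟨hcl, hsm', hadd, hanti', h0, hz, hFc, fun a b hab hne => hFm a b ⟨hab, hne⟩⟩
  obtain ⟨e, he⟩ := hKint
  obtain ⟨g, hg⟩ := geometric_hahn_banach_point_open hconv.interior isOpen_interior hz
  have hge : 0 < g e := by simpa using hg e he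
  have hgK : ∀ v ∈ K, 0 ≤ g v := by
    intro v hv
    by_contra hlt
    push Not at hlt
    have h1 : ((-g v) / g e) • e + v ∈ interior K :=
      int_add hadd (int_smul hsm' (div_pos (neg_pos.2 hlt) hge) he) hv
    have h2 := hg _ h1
    simp only [map_zero, map_add, map_smul, smul_eq_mul] at h2
    rw [div_mul_cancel₀ _ hge.ne'] at h2
    linarith
  obtain ⟨F', hF'c, hd, hcpt, hpos⟩ := hH3
  have h : Ctx K F F' (omegaSet F x) e ((g e)⁻¹ • g) :=
    { closed := hcl
      smul := hsm'
      add := hadd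
      anti := hanti'
      zero := h0
      eint := he
      fpos := fun v hv => by
        have := hgK v hv
        simp only [ContinuousLinearMap.smul_apply, smul_eq_mul]
        positivity
      fe := by simp [hge.ne']
      Fc := hF'c
      hd := hd
      cpt := hcpt
      pos := fun y v hv hv0 => by
        have := hpos y v ⟨by simpa [coneLE] using hv, hv0.symm⟩
        simpa [coneLL] using this
      Oc := omega_compact hc
      Oinv := fun z hz => omega_inv hFc hz
      cs := inferInstance }
  by_cases hB : ∃ z ∈ omegaSet F x, ∀ n, 1 ≤ n → D F F' n z e - (2:ℝ) • e ∉ interior K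
  · obtain ⟨z, hz, hne⟩ := hB
    exact hnot (caseB h m hc hz hne)
  push Not at hB
  obtain ⟨s0, hs0, hA⟩ := caseA h m hc hB
  have heK : e ∈ K := interior_subset he
  have he0 : e ≠ 0 := by rintro rfl; exact hz he
  obtain ⟨r, hr, hrX⟩ : ∃ r : ℝ, 0 < r ∧ x + r • e ∈ X := by
    have ht : Tendsto (fun s : ℝ => x + s • e) (𝓝[>] 0) (𝓝 x) := by
      have hcon : Continuous (fun s : ℝ => x + s • e) := by fun_prop
      have := hcon.tendsto 0
      simp only [zero_smul, add_zero] at this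
      exact this.mono_left nhdsWithin_le_nhds
    obtain ⟨s, hs1, hs2⟩ := ((ht.eventually (hXopen.mem_nhds hx)).and
      self_mem_nhdsWithin).exists
    exact ⟨s, hs2, hs1⟩
  have hxu : coneLE K x (x + r • e) := by
    unfold coneLE
    rw [add_sub_cancel_left]
    exact hsm' _ heK _ hr.le
  have hO := hωc x hx _ hrX hxu
  have hpos' : ∀ j : ℕ, 0 < r / ((j : ℝ) + 1) := fun j => by positivity
  have hyI : ∀ j : ℕ, x + (r / ((j : ℝ) + 1)) • e ∈ ordCC K x (x + r • e) := by
    intro j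
    constructor
    · unfold coneLE
      rw [add_sub_cancel_left]
      exact hsm' _ heK _ (hpos' j).le
    · unfold coneLE
      rw [add_sub_add_left_eq_sub, ← sub_smul]
      refine hsm' _ heK _ (sub_nonneg.2 (div_le_self hr.le ?_))
      have : (0 : ℝ) ≤ j := Nat.cast_nonneg j
      linarith
  have hyX : ∀ j : ℕ, x + (r / ((j : ℝ) + 1)) • e ∈ X := fun j =>
    hXoc x hx _ hrX ⟨hxu, by simp [hr.ne', he0]⟩ (hyI j)
  have hyne : ∀ j : ℕ, x ≠ x + (r / ((j : ℝ) + 1)) • e := by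
    intro j hj
    have h1 : (r / ((j : ℝ) + 1)) • e = 0 := by
      have := hj.symm
      rwa [add_eq_left] at this
    rcases smul_eq_zero.1 h1 with h2 | h2
    · exact (hpos' j).ne' h2
    · exact he0 h2
  have hch := fun j : ℕ => hA _ (hO.1 _ (hyI j)).1 (hyI j).1 (hyne j)
  choose η hη ζ hζ hηζ using hch
  have hmem : ∀ j, (η j, ζ j) ∈
      closure (⋃ y ∈ ordCC K x (x + r • e), omegaSet F y) ×ˢ omegaSet F x := fun j =>
    ⟨subset_closure (mem_iUnion₂.2 ⟨_, hyI j, hη j⟩), hζ j⟩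
  obtain ⟨a, ha, φ, hφ, ht⟩ := (hO.2.1.prod (omega_compact hc)).tendsto_subseq hmem
  have ht1 : Tendsto (fun n => η (φ n)) atTop (𝓝 a.1) := (continuous_fst.tendsto a).comp ht
  have ht2 : Tendsto (fun n => ζ (φ n)) atTop (𝓝 a.2) := (continuous_snd.tendsto a).comp ht
  have hK1 : a.1 - a.2 - s0 • e ∈ K :=
    hcl.mem_of_tendsto ((ht1.sub ht2).sub_const _) (Eventually.of_forall fun n => hηζ _)
  have hlim : Tendsto (fun n : ℕ => r / (((φ n : ℕ) : ℝ) + 1)) atTop (𝓝 0) := by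
    have h1 : Tendsto (fun n : ℕ => r / ((n : ℝ) + 1)) atTop (𝓝 0) :=
      tendsto_const_nhds.div_atTop
        (tendsto_atTop_add_const_right _ _ tendsto_natCast_atTop_atTop)
    exact h1.comp hφ.tendsto_atTop
  have ha1 : a.1 ∈ omegaSet F x := by
    rw [← heq]
    refine mem_iInter₂.2 fun u hu => ?_
    refine isClosed_closure.mem_of_tendsto ht1 ?_
    have hux : u - x ∈ interior K := hu.2
    have h2 : Tendsto (fun n : ℕ => u - x - (r / (((φ n : ℕ) : ℝ) + 1)) • e) atTop
        (𝓝 (u - x)) := by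
      have := (hlim.smul_const e).const_sub (u - x)
      simpa using this
    filter_upwards [h2.eventually (isOpen_interior.mem_nhds hux)] with n hn
    refine subset_closure (mem_iUnion₂.2 ⟨_, ⟨hyX (φ n), ⟨(hyI _).1, hyne _⟩, ?_⟩, hη (φ n)⟩)
    unfold coneLE
    rw [← sub_sub]
    exact interior_subset hn
  refine m.cyc3 hc ha.2 ha1 ?_
  have := int_add hadd (int_smul hsm' hs0 he) hK1
  simpa using this

theorem omegaMinus_eq {K : Set V} {F : V → V} {X : Set V} {x : V} :
    omegaMinus K F X x = omegaPlus (-K) F X x := by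
  unfold omegaMinus omegaPlus coneLL coneLT coneLE
  simp only [int_neg, Set.mem_neg, neg_sub, ne_comm]

theorem mainMinus [CompleteSpace V] {K : Set V} {F : V → V} {X : Set V}
    (hK : IsConeOrder K) (hKint : (interior K).Nonempty)
    (hFc : Continuous F) (hFm : StronglyMonotoneMap K F)
    (hXopen : IsOpen X) (hXoc : OrderConvexSet K X)
    (hωc : OmegaCompactIntervals K F X) (hH3 : SmoothStronglyPositive K F)
    {x : V} (hx : x ∈ X) (hnot : ¬ IsLinearlyStableCycle F (omegaSet F x)) :
    omegaMinus K F X x ≠ omegaSet F x := by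
  rw [omegaMinus_eq]
  have hLE : ∀ a b, coneLE (-K) a b ↔ coneLE K b a := by
    intro a b; unfold coneLE; rw [Set.mem_neg, neg_sub]
  have hLT : ∀ a b, coneLT (-K) a b ↔ coneLT K b a := by
    intro a b; unfold coneLT; rw [hLE, ne_comm]
  have hLL : ∀ a b, coneLL (-K) a b ↔ coneLL K b a := by
    intro a b; unfold coneLL; rw [int_neg, Set.mem_neg, neg_sub]
  have hCC : ∀ a b, ordCC (-K) a b = ordCC K b a := by
    intro a b; ext z
    unfold ordCC
    simp only [Set.mem_ofPred_eq, hLE]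
    exact and_comm
  refine mainPlus ?_ ?_ hFc ?_ hXopen ?_ ?_ ?_ hx hnot
  · obtain ⟨hcl, hconv, hsm, hadd, hanti⟩ := hK
    refine ⟨hcl.neg, hconv.neg, ?_, ?_, ?_⟩
    · intro v hv t ht
      have := hsm _ hv t ht
      simpa using this
    · intro v hv w hw
      have := hadd _ hv _ hw
      rw [Set.mem_neg, neg_add]
      exact this
    · rw [neg_neg, inter_comm]; exact hanti
  · rw [int_neg]; exact hKint.neg
  · intro a b hab
    rw [hLL]; exact hFm _ _ ((hLT _ _).1 hab)
  · intro a ha b hb hab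
    rw [hCC]; exact hXoc b hb a ha ((hLT _ _).1 hab)
  · intro a ha b hb hab
    rw [hCC]; exact hωc b hb a ha ((hLE _ _).1 hab)
  · obtain ⟨F', hF'c, hd, hcpt, hpos⟩ := hH3
    refine ⟨F', hF'c, hd, hcpt, ?_⟩
    intro y v hv
    have h1 : coneLT K 0 (-v) := by
      have := (hLT _ _).1 hv
      refine ⟨by simpa [coneLE] using this.1, ?_⟩
      intro h0
      exact this.2 (by simpa using h0.symm)
    have h2 := hpos y _ h1
    rw [hLL]
    simpa [coneLL] using h2

end
end CSU

/-- Claim in the proof of Theorem A: under (H1)–(H3), every point of `X` whose ω-limit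
set is not a linearly stable cycle lies in `U₊ ∩ U₋`. -/
theorem complement_subset_unstable [CompleteSpace E] [TopologicalSpace.SeparableSpace E]
    (K : Set E) (F : E → E) (X : Set E)
    -- (H1)
    (hK : IsConeOrder K) (hKint : (interior K).Nonempty)
    (hFc : Continuous F) (hFm : StronglyMonotoneMap K F)
    -- (H2)
    (hXopen : IsOpen X) (hXoc : OrderConvexSet K X) (hXinv : Set.MapsTo F X X)
    (hωc : OmegaCompactIntervals K F X)
    -- (H3)
    (hH3 : SmoothStronglyPositive K F) :
    X \ {x ∈ X | IsLinearlyStableCycle F (omegaSet F x)} ⊆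
      Uplus K F X ∩ Uminus K F X := by
  intro x hx
  have hnot : ¬ IsLinearlyStableCycle F (omegaSet F x) := fun hs => hx.2 ⟨hx.1, hs⟩
  exact ⟨⟨hx.1, CSU.mainPlus hK hKint hFc hFm hXopen hXoc hωc hH3 hx.1 hnot⟩,
    ⟨hx.1, CSU.mainMinus hK hKint hFc hFm hXopen hXoc hωc hH3 hx.1 hnot⟩⟩
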